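/- Let W(n) = Der_F A(n) be the Jacobson–Witt algebra. Each Sq(D_i) (1 ≤ i ≤ n) is a 2-cocycle of W(n) with adjoint coefficients, and for every 2-cocycle ψ of W(n) with adjoint coefficients there exist unique scalars c_1,…,c_n ∈ F such that ψ − Σ_{i=1}^n c_i·Sq(D_i) is a 2-coboundary. (Equivalently, H²(W(n),W(n)) is the n-dimensional F-vector space ⊕_{i=1}^n ⟨Sq(D_i)⟩.) -/

import Mathlib

/-!
# The second adjoint cohomology of `W(n)`

Write `X i` for the coordinates, `t i = X i • D i` for the standard torus, `v i = X i ^ 2 • D i`,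
and `p = q + 5`. Everything except the last step takes place in a `TruncModel`, an abstract algebra
with coordinates, partial derivatives and an evaluation at the origin, and cochains are bundled
bilinear maps. The basic tool is the Cartan formula `IsCoc.lie_eq`: for a cocycle `ψ`, the cochain
`⁅z, ψ⁆` is the coboundary of `ψ z`.

*The squares.* Divided powers of a derivation satisfy the Leibniz rule as long as no factorial
vanishes, so the cocycle identity for `Sq (D i)` becomes the Jacobi identity summed over
`a + b + c = p` (`isCoc_sqHom`). The value of `Sq (D i)` on `(v i, X i ^ (p - 1) • D i)` at the
origin is `-3 ≠ 0` (`κ_Sq`). These two fields commute and vanish to second order, so coboundaries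
vanish there; this gives the uniqueness of the scalars (`Sq_unique`).

*Normalization.* Each `t i` acts with `t i ^ p = t i`, so the Cartan formula makes a cocycle
torus-invariant up to a coboundary (`stage_T1`). Torus-invariant derivations are inner and toral
(`der0`), and this allows `ψ (t i) = 0` (`stage_T2`). Then `ψ (D i)` is a 1-cocycle which can be
integrated explicitly along `X i`, the obstruction in top degree being handled by `der0` and
`(ad D i) ^ p = 0`; hence one may take `ψ (D i) = 0` (`stage_D`, `stage1`). Subtracting multiples of
the `Sq (D i)` and of the coboundaries of `nrm i k` kills the `D i`-component of
`ψ (v i, X i ^ (p - 2) • t k)` at the origin for all `i, k` (`stage2`).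

*Normalized cocycles vanish.* The kernel of a cocycle is a Lie subalgebra, and here it contains all
`D j` and `t j`. If the kernel contains all `⁅D j, x⁆` for a weight vector `x`, then `ψ x` commutes
with the `D j`, so `ψ x` is determined by its values at the origin, and weights leave only a few of
these (`Normalized.crit`). This puts into the kernel first the `v i` (`Normalized.v_eq`), then the
`X i • D j` (`Normalized.gl_eq`), then the `X i ^ 3 • D i` (`Normalized.cube_mem`). They, and
the brackets `X i • t j` among them, generate `Der A` together with the `D j`, by induction on the
degree (`Normalized.eq_zero`).
-/

set_option maxHeartbeats 1000000
set_option synthInstance.maxHeartbeats 400000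

open scoped BigOperators
noncomputable section

variable (F : Type*) [Field F] (p n : ℕ)

/-- The ideal `(X_1^p, …, X_n^p)` of the polynomial ring. -/
def truncIdeal : Ideal (MvPolynomial (Fin n) F) :=
  Ideal.span (Set.range fun i : Fin n => MvPolynomial.X i ^ p)

/-- The truncated polynomial algebra `A(n) = F[x_1,…,x_n]/(x_1^p,…,x_n^p)`. -/
abbrev TruncP := MvPolynomial (Fin n) F ⧸ truncIdeal F p n

/-- The monomial `x^a` in `A(n)`. -/
def xpow (a : Fin n → ℕ) : TruncP F p n :=
  Ideal.Quotient.mk _ (MvPolynomial.monomial (Finsupp.equivFunOnFinite.symm a) 1)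

/-- Lift an `F`-linear map killing the truncation ideal to the quotient. -/
def liftF {N : Type*} [AddCommGroup N] [Module F N]
    (f : MvPolynomial (Fin n) F →ₗ[F] N)
    (h : (truncIdeal F p n).restrictScalars F ≤ LinearMap.ker f) :
    TruncP F p n →ₗ[F] N :=
  (Submodule.liftQ ((truncIdeal F p n).restrictScalars F) f h) ∘ₗ
    (Submodule.Quotient.restrictScalarsEquiv F (truncIdeal F p n)).symm.toLinearMap

lemma liftF_mk {N : Type*} [AddCommGroup N] [Module F N]
    (f : MvPolynomial (Fin n) F →ₗ[F] N)
    (h : (truncIdeal F p n).restrictScalars F ≤ LinearMap.ker f)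
    (x : MvPolynomial (Fin n) F) :
    liftF F p n f h (Ideal.Quotient.mk _ x) = f x := by
  simp only [liftF, LinearMap.coe_comp, Function.comp_apply, LinearEquiv.coe_coe]
  have : (Ideal.Quotient.mk (truncIdeal F p n)) x = Submodule.Quotient.mk x := rfl
  rw [this, Submodule.Quotient.restrictScalarsEquiv_symm_mk, Submodule.liftQ_apply]

lemma truncIdeal_pderiv_mem [CharP F p] (j : Fin n) {f : MvPolynomial (Fin n) F}
    (hf : f ∈ truncIdeal F p n) :
    Ideal.Quotient.mk (truncIdeal F p n) (MvPolynomial.pderiv j f) = 0 := by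
  classical
  let K : Ideal (MvPolynomial (Fin n) F) :=
    { carrier := {g | Ideal.Quotient.mk (truncIdeal F p n) (MvPolynomial.pderiv j g) = 0 ∧
        Ideal.Quotient.mk (truncIdeal F p n) g = 0},
      add_mem' := by
        rintro a b ⟨ha1, ha2⟩ ⟨hb1, hb2⟩
        refine ⟨?_, ?_⟩
        · rw [map_add, map_add, ha1, hb1, add_zero]
        · rw [map_add, ha2, hb2, add_zero]
      zero_mem' := ⟨by rw [map_zero, map_zero], by rw [map_zero]⟩
      smul_mem' := by
        rintro c x ⟨hx1, hx2⟩
        refine ⟨?_, ?_⟩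
        · have hL : MvPolynomial.pderiv j (c * x)
              = c * MvPolynomial.pderiv j x + x * MvPolynomial.pderiv j c := by
            have := (MvPolynomial.pderiv j).leibniz c x
            simpa [smul_eq_mul, mul_comm] using this
          rw [smul_eq_mul, hL]
          rw [map_add, map_mul, map_mul, hx1, hx2, mul_zero, zero_mul, add_zero]
        · rw [smul_eq_mul, map_mul, hx2, mul_zero] }
  have hle : truncIdeal F p n ≤ K := by
    rw [truncIdeal, Ideal.span_le]
    rintro _ ⟨i, rfl⟩
    refine ⟨?_, ?_⟩
    · have hgen : MvPolynomial.pderiv j (MvPolynomial.X (R := F) i ^ p) = 0 := by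
        rw [MvPolynomial.X_pow_eq_monomial, MvPolynomial.pderiv_monomial]
        rcases eq_or_ne i j with h | h
        · subst h
          simp [Finsupp.single_apply, CharP.cast_eq_zero F p]
        · simp [Finsupp.single_apply, h]
      rw [hgen, map_zero]
    · exact Ideal.Quotient.eq_zero_iff_mem.mpr (Ideal.subset_span ⟨i, rfl⟩)
  exact (hle hf).1

lemma truncIdeal_support {f : MvPolynomial (Fin n) F} (hf : f ∈ truncIdeal F p n) :
    ∀ d ∈ f.support, ∃ i, p ≤ d i := by
  classical
  let K : Ideal (MvPolynomial (Fin n) F) :=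
    { carrier := {g | ∀ d ∈ g.support, ∃ i, p ≤ d i},
      add_mem' := by
        intro a b ha hb d hd
        rcases Finset.mem_union.mp (MvPolynomial.support_add hd) with h | h
        · exact ha d h
        · exact hb d h
      zero_mem' := by simp
      smul_mem' := by
        intro c x hx d hd
        rw [smul_eq_mul] at hd
        obtain ⟨d1, hd1, d2, hd2, rfl⟩ := Finset.mem_add.mp (MvPolynomial.support_mul c x hd)
        obtain ⟨i, hi⟩ := hx d2 hd2
        exact ⟨i, le_trans hi (by simp)⟩ }
  have hle : truncIdeal F p n ≤ K := by
    rw [truncIdeal, Ideal.span_le]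
    rintro _ ⟨i, rfl⟩ d hd
    simp only [MvPolynomial.X_pow_eq_monomial] at hd
    rw [MvPolynomial.support_monomial] at hd
    simp only [one_ne_zero, if_false] at hd
    rcases Finset.mem_singleton.mp hd with rfl
    exact ⟨i, by simp⟩
  exact hle hf

/-- The coefficient of `x^a` (for `a` componentwise `< p`) of an element of `A(n)`,
as a linear functional. For `a` not in the box this is defined to be `0`. -/
def coeffT (a : Fin n → ℕ) : TruncP F p n →ₗ[F] F :=
  if h : ∀ i, a i < p then
    liftF F p n
      { toFun := fun f => f.coeff (Finsupp.equivFunOnFinite.symm a),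
        map_add' := fun f g => MvPolynomial.coeff_add _ f g,
        map_smul' := fun c f => MvPolynomial.coeff_smul _ c f }
      (by
        intro f hf
        have hf' : f ∈ truncIdeal F p n := hf
        simp only [LinearMap.mem_ker, LinearMap.coe_mk, AddHom.coe_mk]
        by_contra hne
        have hmem : Finsupp.equivFunOnFinite.symm a ∈ f.support :=
          MvPolynomial.mem_support_iff.mpr hne
        obtain ⟨i, hi⟩ := truncIdeal_support F p n hf' _ hmem
        have heq : (Finsupp.equivFunOnFinite.symm a) i = a i := rfl
        have h2 := h i
        rw [heq] at hi
        omega)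
  else 0

/-- The Jacobson–Witt algebra `W(n) = Der_F A(n)`. -/
abbrev Witt := Derivation F (TruncP F p n) (TruncP F p n)

def DjL [CharP F p] (j : Fin n) : TruncP F p n →ₗ[F] TruncP F p n :=
  liftF F p n
    ((Ideal.Quotient.mkₐ F (truncIdeal F p n)).toLinearMap ∘ₗ (MvPolynomial.pderiv j).toLinearMap)
    (by
      intro f hf
      have hf' : f ∈ truncIdeal F p n := hf
      simp only [LinearMap.mem_ker, LinearMap.coe_comp, Function.comp_apply,
        AlgHom.toLinearMap_apply, Ideal.Quotient.mkₐ_eq_mk, Derivation.coeFn_coe]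
      exact truncIdeal_pderiv_mem F p n j hf')

lemma DjL_mk [CharP F p] (j : Fin n) (f : MvPolynomial (Fin n) F) :
    DjL F p n j (Ideal.Quotient.mk _ f) = Ideal.Quotient.mk _ (MvPolynomial.pderiv j f) := by
  rw [DjL, liftF_mk]
  simp

/-- The partial derivative `D_j = ∂/∂x_j`, as a derivation of `A(n)`. -/
def Dj [CharP F p] (j : Fin n) : Witt F p n where
  toLinearMap := DjL F p n j
  map_one_eq_zero' := by
    have h1 : (1 : TruncP F p n) = Ideal.Quotient.mk _ (1 : MvPolynomial (Fin n) F) :=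
      (map_one _).symm
    rw [LinearMap.coe_mk] at *
    show DjL F p n j 1 = 0
    rw [h1, DjL_mk]
    simp
  leibniz' := by
    intro a b
    obtain ⟨x, rfl⟩ := Ideal.Quotient.mk_surjective a
    obtain ⟨y, rfl⟩ := Ideal.Quotient.mk_surjective b
    show DjL F p n j _ = _ • DjL F p n j _ + _ • DjL F p n j _
    rw [← map_mul, DjL_mk, DjL_mk, DjL_mk, smul_eq_mul, smul_eq_mul, ← map_mul, ← map_mul,
      ← map_add]
    congr 1
    have := (MvPolynomial.pderiv j).leibniz x y
    simpa [smul_eq_mul] using this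
section Cochains

variable (F : Type*) [Field F] {L : Type*} [AddCommGroup L] [Module F L]

/-- A map of two arguments which is `F`-linear in each argument. -/
def IsBilinear (ψ : L → L → L) : Prop :=
  (∀ x, IsLinearMap F (ψ x)) ∧ ∀ y, IsLinearMap F fun x => ψ x y

/-- A 2-cochain with adjoint coefficients: an alternating `F`-bilinear map. -/
def IsCochain (ψ : L → L → L) : Prop :=
  IsBilinear F ψ ∧ ∀ x, ψ x x = 0

/-- A 2-cocycle with adjoint coefficients, for the bracket `B`. -/
def IsCocycle (B : L → L → L) (ψ : L → L → L) : Prop :=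
  IsCochain F ψ ∧ ∀ x y z,
    B x (ψ y z) - B y (ψ x z) + B z (ψ x y)
      - ψ (B x y) z + ψ (B x z) y - ψ (B y z) x = 0

/-- A 2-coboundary with adjoint coefficients, for the bracket `B`. -/
def IsCoboundary (B : L → L → L) (ψ : L → L → L) : Prop :=
  ∃ φ : L →ₗ[F] L, ∀ x y, ψ x y = B x (φ y) - B y (φ x) - φ (B x y)

/-- A 2-cocycle of a subspace `V` (closed under the bracket `B` of the ambient space),
with adjoint coefficients.  The cochain is recorded as an everywhere-defined bilinear
map preserving `V`; only its restriction to `V` is relevant. -/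
def IsCocycleOn (V : Submodule F L) (B : L → L → L) (ψ : L → L → L) : Prop :=
  IsBilinear F ψ ∧ (∀ x ∈ V, ∀ y ∈ V, ψ x y ∈ V) ∧ (∀ x ∈ V, ψ x x = 0) ∧
    ∀ x ∈ V, ∀ y ∈ V, ∀ z ∈ V,
      B x (ψ y z) - B y (ψ x z) + B z (ψ x y)
        - ψ (B x y) z + ψ (B x z) y - ψ (B y z) x = 0

/-- A 2-coboundary of a subspace `V`, with adjoint coefficients. -/
def IsCoboundaryOn (V : Submodule F L) (B : L → L → L) (ψ : L → L → L) : Prop :=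
  ∃ φ : L →ₗ[F] L, (∀ x ∈ V, φ x ∈ V) ∧
    ∀ x ∈ V, ∀ y ∈ V, ψ x y = B x (φ y) - B y (φ x) - φ (B x y)

/-- A derivation of a subspace `V` closed under the bracket `B`:
an `F`-linear map preserving `V` and satisfying the Leibniz rule on `V`. -/
def IsDerivationOn (V : Submodule F L) (B : L → L → L) (γ : L →ₗ[F] L) : Prop :=
  (∀ x ∈ V, γ x ∈ V) ∧ ∀ x ∈ V, ∀ y ∈ V, γ (B x y) = B (γ x) y + B x (γ y)

/-- An inner derivation of a subspace `V`: a map agreeing on `V` with `ad z = B z ·`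
for some `z ∈ V`. -/
def IsInnerOn (V : Submodule F L) (B : L → L → L) (δ : L → L) : Prop :=
  ∃ z ∈ V, ∀ y ∈ V, δ y = B z y

/-- An inner derivation: `δ = ad z = B z ·` for some `z`. -/
def IsInner (B : L → L → L) (δ : L → L) : Prop := ∃ z, ∀ y, δ y = B z y

/-- The squaring `Sq(γ)(x,y) = ∑_{i=1}^{p-1} [γ^i(x), γ^{p-i}(y)]/(i!·(p-i)!)`
of an operator `γ`, relative to the bracket `B`. -/
def Squaring (p : ℕ) (B : L → L → L) (γ : L → L) : L → L → L := fun x y =>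
  ∑ i ∈ Finset.Ioo 0 p,
    (((Nat.factorial i * Nat.factorial (p - i) : ℕ) : F))⁻¹ • B (γ^[i] x) (γ^[p - i] y)

/-- `Sq(z) := Sq(ad z)` for an element `z`. -/
def SqE (p : ℕ) (B : L → L → L) (z : L) : L → L → L :=
  Squaring F p B (fun y => B z y)

/-- The Hochschild operator
`H_ψ(x)(y) = ∑_{j=0}^{p-1} (ad x)^j (ψ(x, (ad x)^{p-1-j}(y))) − ψ(x^{[p]}, y)`,
for the bracket `B`, the 2-cochain `ψ`, and the chosen `p`-th power `xp` of `x`. -/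
def HOp (p : ℕ) (B : L → L → L) (ψ : L → L → L) (x xp : L) : L → L := fun y =>
  (∑ j ∈ Finset.range p, (fun z => B x z)^[j] (ψ x ((fun z => B x z)^[p - 1 - j] y)))
    - ψ xp y

end Cochains

/-! ### Truncated polynomial models -/

/-- A truncated polynomial algebra in abstract form: a commutative algebra `A` generated over `F` by
elements `X i` with `X i ^ p = 0`, derivations `D j` with `D j (X i) = δ_{ij}`, and an augmentation
`ε` (the value at the origin) killing all `X i`. The monomials need not be assumed independent: that
follows from the existence of the `D j` and of `ε`. -/
structure TruncModel (F A : Type*) [Field F] [CommRing A] [Algebra F A] (p n : ℕ) where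
  X : Fin n → A
  D : Fin n → Derivation F A A
  ε : A →ₐ[F] F
  D_X : ∀ j i, D j (X i) = if i = j then 1 else 0
  X_pow : ∀ i, X i ^ p = 0
  ε_X : ∀ i, ε (X i) = 0
  adjoin_X : Algebra.adjoin F (Set.range X) = ⊤

namespace TruncModel

section Basic

variable {F A : Type*} [Field F] [CommRing A] [Algebra F A] {p n : ℕ}
variable (M : TruncModel F A p n)

/-- The monomial `X ^ a`; exponents `≥ p` are allowed and give `0`. -/
def mon (a : Fin n → ℕ) : A := ∏ i, M.X i ^ a i

/-- The vector field `X ^ a • D k`. -/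
def e (a : Fin n → ℕ) (k : Fin n) : Derivation F A A := M.mon a • M.D k

/-- The toral element `X k • D k`. -/
def t (k : Fin n) : Derivation F A A := M.X k • M.D k

/-- The coefficient of `D l` in the value of a vector field at the origin. -/
def κ (l : Fin n) : Derivation F A A →ₗ[F] F where
  toFun u := M.ε (u (M.X l))
  map_add' u v := by simp
  map_smul' c u := by simp

/-- The weight `a j - δ_{jk}` of `X ^ a • D k` under `t j`. -/
def wt (a : Fin n → ℕ) (k j : Fin n) : F := (a j : F) - if j = k then 1 else 0

lemma κ_apply (l : Fin n) (u : Derivation F A A) : M.κ l u = M.ε (u (M.X l)) := rfl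

lemma D_X_self (j : Fin n) : M.D j (M.X j) = 1 := by simp [M.D_X]

lemma D_X_ne {i j : Fin n} (h : i ≠ j) : M.D j (M.X i) = 0 := by simp [M.D_X, h]

lemma span_mon : Submodule.span F {f : A | ∃ a : Fin n → ℕ, (∀ i, a i < p) ∧ f = M.mon a} = ⊤ := by
  rw [eq_top_iff]
  rintro f -
  have hf : f ∈ Algebra.adjoin F (Set.range M.X) := by rw [M.adjoin_X]; trivial
  rw [Algebra.adjoin_range_eq_range_aeval] at hf
  obtain ⟨P, rfl⟩ := hf
  induction P using MvPolynomial.induction_on' with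
  | monomial d c =>
    change MvPolynomial.aeval M.X _ ∈ _
    rw [MvPolynomial.aeval_monomial, ← Algebra.smul_def]
    refine Submodule.smul_mem _ _ ?_
    rw [Finsupp.prod_fintype _ _ (by simp)]
    by_cases h : ∀ i, d i < p
    · exact Submodule.subset_span ⟨d, h, rfl⟩
    · push Not at h
      obtain ⟨i, hi⟩ := h
      rw [Finset.prod_eq_zero (Finset.mem_univ i)]
      · exact Submodule.zero_mem _
      · exact pow_eq_zero_of_le hi (M.X_pow i)
  | add P Q hP hQ =>
    change MvPolynomial.aeval M.X _ ∈ _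
    rw [map_add]
    exact Submodule.add_mem _ hP hQ

lemma der_ext {u v : Derivation F A A} (h : ∀ l, u (M.X l) = v (M.X l)) : u = v := by
  apply Derivation.ext_of_adjoin_eq_top _ M.adjoin_X
  rintro _ ⟨i, rfl⟩
  exact h i

lemma sum_apply {ι : Type*} (s : Finset ι) (f : ι → Derivation F A A) (x : A) :
    (∑ i ∈ s, f i) x = ∑ i ∈ s, f i x := by
  classical
  induction s using Finset.induction_on with
  | empty => simp
  | insert a s ha ih => rw [Finset.sum_insert ha, Finset.sum_insert ha, Derivation.add_apply, ih]

lemma decomp (u : Derivation F A A) : u = ∑ k, u (M.X k) • M.D k := by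
  apply M.der_ext
  intro l
  rw [sum_apply]
  simp [M.D_X]

omit M in
lemma lie_csmul (c : F) (u v : Derivation F A A) : ⁅u, c • v⁆ = c • ⁅u, v⁆ := lie_smul c u v

omit M in
lemma csmul_lie (c : F) (u v : Derivation F A A) : ⁅c • u, v⁆ = c • ⁅u, v⁆ := smul_lie c u v

lemma lie_smul_smul (f g : A) (u v : Derivation F A A) :
    ⁅f • u, g • v⁆ = (f * g) • ⁅u, v⁆ + (f * u g) • v - (g * v f) • u := by
  ext x
  simp only [Derivation.commutator_apply, Derivation.smul_apply, Derivation.sub_apply,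
    Derivation.add_apply, Derivation.leibniz, smul_eq_mul]
  ring

lemma lie_smul_right (g : A) (u v : Derivation F A A) :
    ⁅u, g • v⁆ = g • ⁅u, v⁆ + u g • v := by
  ext x
  simp only [Derivation.commutator_apply, Derivation.smul_apply,
    Derivation.add_apply, Derivation.leibniz, smul_eq_mul]
  ring

lemma lie_smul_left (g : A) (u v : Derivation F A A) :
    ⁅g • u, v⁆ = g • ⁅u, v⁆ - v g • u := by
  ext x
  simp only [Derivation.commutator_apply, Derivation.smul_apply, Derivation.sub_apply,
    Derivation.leibniz, smul_eq_mul]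
  ring

@[simp] lemma D_D_X (i j l : Fin n) : M.D i (M.D j (M.X l)) = 0 := by
  rw [M.D_X]; split_ifs <;> simp

lemma lie_D_D (i j : Fin n) : ⁅M.D i, M.D j⁆ = 0 := by
  apply M.der_ext
  intro l
  simp [Derivation.commutator_apply]

lemma D_comm (i j : Fin n) (f : A) : M.D i (M.D j f) = M.D j (M.D i f) := by
  have := congrArg (fun u : Derivation F A A => u f) (M.lie_D_D i j)
  simpa [Derivation.commutator_apply, sub_eq_zero] using this

lemma lie_smul_D (f g : A) (j k : Fin n) :
    ⁅f • M.D j, g • M.D k⁆ = (f * M.D j g) • M.D k - (g * M.D k f) • M.D j := by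
  rw [lie_smul_smul, lie_D_D, smul_zero, zero_add]

lemma lie_D_smul_D (g : A) (j k : Fin n) : ⁅M.D j, g • M.D k⁆ = M.D j g • M.D k := by
  rw [lie_smul_right, lie_D_D, smul_zero, zero_add]

lemma lie_D_apply_X (i l : Fin n) (u : Derivation F A A) :
    ⁅M.D i, u⁆ (M.X l) = M.D i (u (M.X l)) := by
  rw [Derivation.commutator_apply, M.D_X]
  split_ifs <;> simp

/-- Linear maps on `Der A` agree once they agree on the fields `X ^ a • D k`. -/
lemma L_ext {N : Type*} [AddCommGroup N] [Module F N] {φ φ' : Derivation F A A →ₗ[F] N}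
    (h : ∀ a : Fin n → ℕ, (∀ i, a i < p) → ∀ k, φ (M.e a k) = φ' (M.e a k)) : φ = φ' := by
  have key : ∀ (k : Fin n) (f : A), φ (f • M.D k) = φ' (f • M.D k) := by
    intro k f
    have hf : f ∈ Submodule.span F {f : A | ∃ a : Fin n → ℕ, (∀ i, a i < p) ∧ f = M.mon a} := by
      rw [M.span_mon]; trivial
    induction hf using Submodule.span_induction with
    | mem x hx =>
      obtain ⟨a, ha, rfl⟩ := hx
      exact h a ha k
    | zero => simp
    | add x y _ _ hx hy => rw [add_smul, map_add, map_add, hx, hy]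
    | smul c x _ hx => rw [smul_assoc c x (M.D k), LinearMap.map_smul φ c, LinearMap.map_smul φ' c, hx]
  ext u
  rw [M.decomp u, map_sum, map_sum]
  exact Finset.sum_congr rfl fun k _ => key k _

lemma D_prod_eq_zero (j : Fin n) (a : Fin n → ℕ) (s : Finset (Fin n)) (hs : j ∉ s) :
    M.D j (∏ i ∈ s, M.X i ^ a i) = 0 := by
  classical
  induction s using Finset.induction_on with
  | empty => simp
  | insert b s hb ih =>
    simp only [Finset.mem_insert, not_or] at hs
    rw [Finset.prod_insert hb, Derivation.leibniz, ih hs.2, Derivation.leibniz_pow,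
      M.D_X_ne (Ne.symm hs.1)]
    simp

lemma mon_eq (a : Fin n → ℕ) (j : Fin n) :
    M.mon a = M.X j ^ a j * ∏ i ∈ Finset.univ.erase j, M.X i ^ a i :=
  (Finset.mul_prod_erase _ _ (Finset.mem_univ j)).symm

lemma mon_update (a : Fin n → ℕ) (j : Fin n) (m : ℕ) :
    M.mon (Function.update a j m) = M.X j ^ m * ∏ i ∈ Finset.univ.erase j, M.X i ^ a i := by
  rw [M.mon_eq _ j, Function.update_self]
  congr 1
  exact Finset.prod_congr rfl fun i hi => by
    rw [Function.update_of_ne (Finset.ne_of_mem_erase hi)]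

lemma D_mon (a : Fin n → ℕ) (j : Fin n) :
    M.D j (M.mon a) = (a j : F) • M.mon (Function.update a j (a j - 1)) := by
  rw [M.mon_update, M.mon_eq a j, Derivation.leibniz,
    M.D_prod_eq_zero j a _ (Finset.notMem_erase _ _), Derivation.leibniz_pow, M.D_X_self]
  simp [Algebra.smul_def]
  ring

lemma X_D_mon (a : Fin n → ℕ) (j : Fin n) :
    M.X j * M.D j (M.mon a) = (a j : F) • M.mon a := by
  rw [M.D_mon, M.mon_update, M.mon_eq a j]
  rcases h : a j with _ | m
  · simp
  · rw [mul_smul_comm, Nat.add_sub_cancel, pow_succ']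
    ring_nf

lemma lie_D_e (a : Fin n → ℕ) (j k : Fin n) :
    ⁅M.D j, M.e a k⁆ = (a j : F) • M.e (Function.update a j (a j - 1)) k := by
  rw [e, lie_D_smul_D, D_mon, smul_assoc]; rfl

lemma lie_t_e (a : Fin n → ℕ) (j k : Fin n) :
    ⁅M.t j, M.e a k⁆ = wt (F := F) a k j • M.e a k := by
  rw [t, e, lie_smul_D, M.X_D_mon, M.D_X, wt, sub_smul, smul_assoc]
  split_ifs with h
  · subst h; simp
  · simp

lemma lie_t_D (j k : Fin n) : ⁅M.t j, M.D k⁆ = if j = k then - M.D k else 0 := by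
  rw [t, lie_smul_left, M.lie_D_D, M.D_X]
  split_ifs with h
  · subst h; simp
  · simp

lemma lie_t_t (j k : Fin n) : ⁅M.t j, M.t k⁆ = 0 := by
  rw [t, t, lie_smul_D, M.D_X, M.D_X]
  by_cases h : j = k
  · subst h; simp
  · simp [h, Ne.symm h]

lemma ε_mon (a : Fin n → ℕ) (h : ∃ j, a j ≠ 0) : M.ε (M.mon a) = 0 := by
  obtain ⟨j, hj⟩ := h
  rw [M.mon_eq a j, map_mul, map_pow, M.ε_X, zero_pow hj, zero_mul]

lemma mon_zero : M.mon 0 = 1 := by simp [mon]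

lemma e_zero (k : Fin n) : M.e 0 k = M.D k := by simp [e, mon_zero]

end Basic

section CharP

variable {F A : Type*} [Field F] [CommRing A] [Algebra F A] {p n : ℕ}
variable (M : TruncModel F A p n) [hp : Fact p.Prime] [CharP F p]

/-- A function of weight zero under the whole torus is constant. For `T = X j * D j`, the operator
`1 - T ^ (p - 1)` fixes `f` and kills the monomials in which `X j` occurs; all variables are removed
in turn. -/
lemma weight_zero {f : A} (h : ∀ j, M.X j * M.D j f = 0) : f = algebraMap F A (M.ε f) := by
  classical
  have key : ∀ s : Finset (Fin n), f ∈ Submodule.span F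
      {f : A | ∃ a : Fin n → ℕ, (∀ i, a i < p) ∧ (∀ j ∈ s, a j = 0) ∧ f = M.mon a} := by
    intro s
    induction s using Finset.induction_on with
    | empty =>
      have : f ∈ (⊤ : Submodule F A) := trivial
      rw [← M.span_mon] at this
      simpa using this
    | insert j s hj ih =>
      let T : A →ₗ[F] A := (LinearMap.mulLeft F (M.X j)) ∘ₗ (M.D j : A →ₗ[F] A)
      have hT : ∀ g, T g = M.X j * M.D j g := fun g => rfl
      have hp1 : p - 1 ≠ 0 := by have := hp.out.two_le; omega
      have hTf : (T ^ (p - 1)) f = 0 := by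
        obtain ⟨m, hm⟩ := Nat.exists_eq_succ_of_ne_zero hp1
        rw [hm, pow_succ, Module.End.mul_apply, hT, h, map_zero]
      have hTm : ∀ (a : Fin n → ℕ) (m : ℕ), (T ^ m) (M.mon a) = ((a j : F) ^ m) • M.mon a := by
        intro a m
        induction m with
        | zero => simp
        | succ m ih =>
          rw [pow_succ, Module.End.mul_apply, hT, M.X_D_mon, map_smul, ih, smul_smul, pow_succ']
      have hP : f = (1 - T ^ (p - 1)) f := by simp [hTf]
      rw [hP]
      clear hP hTf h
      induction ih using Submodule.span_induction with
      | mem x hx =>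
        obtain ⟨a, ha, has, rfl⟩ := hx
        rw [LinearMap.sub_apply, hTm, Module.End.one_apply]
        by_cases h0 : a j = 0
        · rw [h0, Nat.cast_zero, zero_pow hp1, zero_smul, sub_zero]
          refine Submodule.subset_span ⟨a, ha, ?_, rfl⟩
          intro i hi
          rcases Finset.mem_insert.1 hi with rfl | hi
          · exact h0
          · exact has i hi
        · have : (a j : F) ^ (p - 1) = 1 := by
            have h1 : (a j : ZMod p) ≠ 0 := by
              rw [Ne, ZMod.natCast_eq_zero_iff]
              intro hd
              exact absurd (Nat.le_of_dvd (Nat.pos_of_ne_zero h0) hd) (not_le.2 (ha j))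
            have h2 := congrArg (ZMod.castHom (dvd_refl p) F) (ZMod.pow_card_sub_one_eq_one h1)
            simpa using h2
          rw [this, one_smul, sub_self]
          exact Submodule.zero_mem _
      | zero => rw [map_zero]; exact Submodule.zero_mem _
      | add x y _ _ hx hy => rw [map_add]; exact Submodule.add_mem _ hx hy
      | smul c x _ hx => rw [map_smul]; exact Submodule.smul_mem _ _ hx
  have h1 : f ∈ Submodule.span F {(1 : A)} := by
    refine Submodule.span_mono ?_ (key Finset.univ)
    rintro _ ⟨a, -, ha, rfl⟩
    have : a = 0 := funext fun i => ha i (Finset.mem_univ i)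
    rw [this, M.mon_zero]; rfl
  obtain ⟨c, rfl⟩ := Submodule.mem_span_singleton.1 h1
  simp [Algebra.algebraMap_eq_smul_one]

/-- A vector field commuting with all `D i` has constant coefficients, so it vanishes once its value
at the origin does. -/
lemma eq_zero_of_lie_D {u : Derivation F A A} (h : ∀ i, ⁅M.D i, u⁆ = 0)
    (hκ : ∀ l, M.κ l u = 0) : u = 0 := by
  apply M.der_ext
  intro l
  have := M.weight_zero (f := u (M.X l)) (fun j => by
    rw [← M.lie_D_apply_X, h]; simp)
  rw [this, ← κ_apply, hκ]; simp

omit hp [CharP F p] in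
lemma D_pow_mon (a : Fin n → ℕ) (j : Fin n) (m : ℕ) :
    ((M.D j : A →ₗ[F] A) ^ m) (M.mon a) =
      ((a j).descFactorial m : F) • M.mon (Function.update a j (a j - m)) := by
  induction m with
  | zero => simp
  | succ m ih =>
    rw [pow_succ', Module.End.mul_apply, ih, map_smul, Derivation.coeFn_coe, M.D_mon, smul_smul,
      Function.update_idem, Function.update_self, Nat.descFactorial_succ, Nat.sub_sub]
    push_cast
    rw [mul_comm]

omit hp [CharP F p] in
lemma D_pow_p (j : Fin n) : (M.D j : A →ₗ[F] A) ^ p = 0 := by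
  apply LinearMap.ext_on M.span_mon
  rintro _ ⟨a, ha, rfl⟩
  rw [M.D_pow_mon, Nat.descFactorial_eq_zero_iff_lt.2 (ha j)]
  simp

/-- `ad u` as an endomorphism. -/
abbrev adE (u : Derivation F A A) : Module.End F (Derivation F A A) :=
  LieModule.toEnd F (Derivation F A A) (Derivation F A A) u

omit hp [CharP F p] in
lemma adE_D_pow_apply (j l : Fin n) (m : ℕ) (u : Derivation F A A) :
    ((adE (M.D j)) ^ m) u (M.X l) = ((M.D j : A →ₗ[F] A) ^ m) (u (M.X l)) := by
  induction m with
  | zero => simp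
  | succ m ih =>
    rw [pow_succ', Module.End.mul_apply, LieModule.toEnd_apply_apply, M.lie_D_apply_X, ih, pow_succ',
      Module.End.mul_apply]; rfl

omit hp [CharP F p] in
lemma adE_D_pow_p (j : Fin n) : (adE (M.D j)) ^ p = 0 := by
  ext1 u
  apply M.der_ext
  intro l
  rw [M.adE_D_pow_apply, M.D_pow_p]; simp

lemma wt_pow (a : Fin n → ℕ) (k j : Fin n) : (wt (F := F) a k j) ^ p = wt a k j := by
  have : (wt (F := F) a k j) = (((a j : ℤ) - if j = k then 1 else 0 : ℤ) : F) := by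
    rw [wt]; push_cast; rfl
  rw [this, ← frobenius_def, map_intCast]

/-- `t j` is toral: its weights lie in the prime field. -/
lemma adE_t_pow_p (j : Fin n) : (adE (M.t j)) ^ p = adE (M.t j) := by
  apply M.L_ext
  intro a _ k
  have : ∀ m : ℕ, ((adE (M.t j)) ^ m) (M.e a k) = (wt (F := F) a k j) ^ m • M.e a k := by
    intro m
    induction m with
    | zero => simp
    | succ m ih =>
      rw [pow_succ', Module.End.mul_apply, ih, LieModule.toEnd_apply_apply, lie_csmul, lie_t_e, smul_smul,
        pow_succ]
  rw [this, wt_pow, LieModule.toEnd_apply_apply, lie_t_e]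

end CharP
end TruncModel

/-! ### Cochains of a Lie algebra in low degree -/

namespace LieCoh
section
set_option linter.unusedSectionVars false
set_option linter.unusedSimpArgs false
variable {F L : Type*} [Field F] [LieRing L] [LieAlgebra F L]

/-- The coboundary of a 1-cochain with adjoint coefficients. -/
def d : (L →ₗ[F] L) →ₗ[F] (L →ₗ[F] L →ₗ[F] L) where
  toFun φ := LinearMap.mk₂ F (fun x y => ⁅x, φ y⁆ - ⁅y, φ x⁆ - φ ⁅x, y⁆)
    (by intros; simp only [add_lie, map_add, lie_add]; abel)
    (by intros; simp only [smul_lie, map_smul, lie_smul]; module)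
    (by intros; simp only [add_lie, map_add, lie_add]; abel)
    (by intros; simp only [smul_lie, map_smul, lie_smul]; module)
  map_add' φ φ' := by
    ext x y
    simp only [LinearMap.mk₂_apply, LinearMap.add_apply, lie_add]; abel
  map_smul' c φ := by
    ext x y
    simp only [LinearMap.mk₂_apply, LinearMap.smul_apply, lie_smul, RingHom.id_apply]; module

lemma d_apply (φ : L →ₗ[F] L) (x y : L) : d φ x y = ⁅x, φ y⁆ - ⁅y, φ x⁆ - φ ⁅x, y⁆ := rfl

/-- Alternating bilinear maps satisfying the 2-cocycle identity with adjoint coefficients, in bundled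
form. -/
structure IsCoc (ψ : L →ₗ[F] L →ₗ[F] L) : Prop where
  alt : ∀ x, ψ x x = 0
  coc : ∀ x y z, ⁅x, ψ y z⁆ - ⁅y, ψ x z⁆ + ⁅z, ψ x y⁆ - ψ ⁅x, y⁆ z + ψ ⁅x, z⁆ y - ψ ⁅y, z⁆ x = 0

lemma IsCoc.skew {ψ : L →ₗ[F] L →ₗ[F] L} (h : IsCoc ψ) (x y : L) : ψ x y = - ψ y x := by
  have := h.alt (x + y)
  simp only [map_add, LinearMap.add_apply, h.alt, zero_add, add_zero] at this
  exact eq_neg_of_add_eq_zero_right this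

lemma IsCoc.sub {ψ ψ' : L →ₗ[F] L →ₗ[F] L} (h : IsCoc ψ) (h' : IsCoc ψ') : IsCoc (ψ - ψ') where
  alt x := by simp [h.alt, h'.alt]
  coc x y z := by
    have h1 := h.coc x y z
    have h2 := h'.coc x y z
    simp only [LinearMap.sub_apply, lie_sub]
    rw [← sub_eq_zero.2 (h1.trans h2.symm)]
    abel

lemma IsCoc.smul {ψ : L →ₗ[F] L →ₗ[F] L} (h : IsCoc ψ) (c : F) : IsCoc (c • ψ) where
  alt x := by simp [h.alt]
  coc x y z := by
    have h1 := h.coc x y z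
    simp only [LinearMap.smul_apply, lie_smul, ← smul_sub, ← smul_add, h1, smul_zero]

lemma IsCoc.zero : IsCoc (0 : L →ₗ[F] L →ₗ[F] L) where
  alt x := by simp
  coc x y z := by simp

lemma IsCoc.add {ψ ψ' : L →ₗ[F] L →ₗ[F] L} (h : IsCoc ψ) (h' : IsCoc ψ') : IsCoc (ψ + ψ') := by
  have : ψ + ψ' = ψ - (-1 : F) • ψ' := by module
  rw [this]; exact h.sub (h'.smul _)

lemma IsCoc.sum {ι : Type*} (s : Finset ι) (ψ : ι → L →ₗ[F] L →ₗ[F] L)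
    (h : ∀ i ∈ s, IsCoc (ψ i)) : IsCoc (∑ i ∈ s, ψ i) :=
  Finset.sum_induction ψ IsCoc (fun _ _ => IsCoc.add) IsCoc.zero h

lemma isCoc_d (φ : L →ₗ[F] L) : IsCoc (d φ) where
  alt x := by simp [d_apply]
  coc x y z := by
    have h1 : φ ⁅⁅x, y⁆, z⁆ = φ ⁅⁅x, z⁆, y⁆ - φ ⁅⁅y, z⁆, x⁆ := by
      rw [lie_lie x y z, ← lie_skew ⁅x, z⁆ y, ← lie_skew ⁅y, z⁆ x, map_sub, map_neg, map_neg]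
      abel
    simp only [d_apply, lie_sub]
    rw [h1, lie_lie x y (φ z), lie_lie x z (φ y), lie_lie y z (φ x)]
    abel

lemma lie_hom2 (z : L) (ψ : L →ₗ[F] L →ₗ[F] L) (x y : L) :
    ⁅z, ψ⁆ x y = ⁅z, ψ x y⁆ - ψ ⁅z, x⁆ y - ψ x ⁅z, y⁆ := by
  simp only [LieHom.lie_apply, LinearMap.sub_apply]; abel

lemma lie_hom1 (z : L) (φ : L →ₗ[F] L) (x : L) : ⁅z, φ⁆ x = ⁅z, φ x⁆ - φ ⁅z, x⁆ := by
  simp only [LieHom.lie_apply]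

/-- Cartan formula: `L_z = d i_z + i_z d`, applied to a cocycle. -/
lemma IsCoc.lie_eq {ψ : L →ₗ[F] L →ₗ[F] L} (h : IsCoc ψ) (z : L) : ⁅z, ψ⁆ = d (ψ z) := by
  ext x y
  rw [lie_hom2, d_apply, ← sub_eq_zero, ← h.coc z x y, h.skew x ⁅z, y⁆, h.skew z ⁅x, y⁆]
  abel

lemma d_lie (z : L) (φ : L →ₗ[F] L) : d ⁅z, φ⁆ = ⁅z, d φ⁆ := by
  ext x y
  have h1 : φ ⁅z, ⁅x, y⁆⁆ = φ ⁅⁅z, x⁆, y⁆ + φ ⁅x, ⁅z, y⁆⁆ := by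
    rw [leibniz_lie z x y, map_add]
  simp only [lie_hom2, lie_hom1, d_apply, lie_sub]
  rw [h1, leibniz_lie z x (φ y), leibniz_lie z y (φ x)]
  abel

lemma d_apply_eq (z : L) (φ : L →ₗ[F] L) : d φ z = ⁅z, φ⁆ + LieModule.toEnd F L L (φ z) := by
  ext y
  simp only [d_apply, LinearMap.add_apply, LieModule.toEnd_apply_apply, lie_hom1]
  rw [← lie_skew y]
  abel

/-- The kernel `{x | ψ (x, ·) = 0}` of a cocycle, a Lie subalgebra by the cocycle identity. -/
def IsCoc.ker {ψ : L →ₗ[F] L →ₗ[F] L} (h : IsCoc ψ) : LieSubalgebra F L :=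
  { LinearMap.ker ψ with
    lie_mem' := by
      intro x y hx hy
      have hx : ψ x = 0 := hx
      have hy : ψ y = 0 := hy
      change ψ ⁅x, y⁆ = 0
      ext z
      have := h.coc x y z
      rw [h.skew ⁅x, z⁆ y, h.skew ⁅y, z⁆ x] at this
      simpa [hx, hy] using this }

lemma IsCoc.mem_ker {ψ : L →ₗ[F] L →ₗ[F] L} (h : IsCoc ψ) {x : L} : x ∈ h.ker ↔ ψ x = 0 := Iff.rfl

end

section pow
variable {F L M N : Type*} [Field F] [LieRing L] [LieAlgebra F L]
  [AddCommGroup M] [Module F M] [LieRingModule L M] [LieModule F L M]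
  [AddCommGroup N] [Module F N] [LieRingModule L N] [LieModule F L N]
  (p : ℕ) [Fact p.Prime] [CharP F p]

/-- In characteristic `p` the `p`-th power of the action of `x` on `Hom(M, N)` is computed from the
`p`-th powers of the actions on `M` and `N`, since left and right composition commute. -/
lemma toEnd_hom_pow_p (x : L) (φ : M →ₗ[F] N) :
    (LieModule.toEnd F L (M →ₗ[F] N) x ^ p) φ =
      (LieModule.toEnd F L N x ^ p) ∘ₗ φ - φ ∘ₗ (LieModule.toEnd F L M x ^ p) := by
  let a : Module.End F (M →ₗ[F] N) := LinearMap.compRight F (LieModule.toEnd F L N x)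
  let b : Module.End F (M →ₗ[F] N) := LinearMap.lcomp F N (LieModule.toEnd F L M x)
  have hab : LieModule.toEnd F L (M →ₗ[F] N) x = a - b := by
    ext φ m
    simp [a, b]
  have hc : Commute a b := by
    ext φ m
    simp [a, b]
  have ha : ∀ m : ℕ, (a ^ m) φ = (LieModule.toEnd F L N x ^ m) ∘ₗ φ := by
    intro m
    induction m with
    | zero => rfl
    | succ m ih => rw [pow_succ', Module.End.mul_apply, ih, pow_succ']; rfl
  have hb : ∀ m : ℕ, (b ^ m) φ = φ ∘ₗ (LieModule.toEnd F L M x ^ m) := by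
    intro m
    induction m with
    | zero => rfl
    | succ m ih => rw [pow_succ', Module.End.mul_apply, ih, pow_succ]; rfl
  have hchar : (a - b) ^ p = a ^ p - b ^ p := by
    rcases subsingleton_or_nontrivial (M →ₗ[F] N) with hs | hn
    · exact Subsingleton.elim _ _
    · have : CharP (Module.End F (M →ₗ[F] N)) p := charP_of_injective_algebraMap
        (FaithfulSMul.algebraMap_injective F (Module.End F (M →ₗ[F] N))) p
      exact sub_pow_char_of_commute p hc
  rw [hab, hchar, LinearMap.sub_apply, ha, hb]
end pow
end LieCoh

/-! ### Torus-invariant derivations -/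

namespace LieCoh
section
set_option linter.unusedSectionVars false
set_option linter.unusedSimpArgs false
variable {F L : Type*} [Field F] [LieRing L] [LieAlgebra F L]

/-- Inner derivations are 1-cocycles. -/
lemma lie_d_toEnd (w : L) : d (LieModule.toEnd F L L w) = 0 := by
  ext x y
  simp only [d_apply, LieModule.toEnd_apply_apply, LinearMap.zero_apply]
  rw [leibniz_lie w x y, ← lie_skew y ⁅w, x⁆]
  abel

lemma d_pow (x : L) (m : ℕ) (φ : L →ₗ[F] L) :
    d ((LieModule.toEnd F L (L →ₗ[F] L) x ^ m) φ) =
      (LieModule.toEnd F L (L →ₗ[F] L →ₗ[F] L) x ^ m) (d φ) := by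
  induction m with
  | zero => simp
  | succ m ih =>
    rw [pow_succ', Module.End.mul_apply, LieModule.toEnd_apply_apply, d_lie, ih, pow_succ',
      Module.End.mul_apply]; rfl

lemma toEnd_commute {M : Type*} [AddCommGroup M] [Module F M] [LieRingModule L M] [LieModule F L M]
    {x y : L} (h : ⁅x, y⁆ = 0) : Commute (LieModule.toEnd F L M x) (LieModule.toEnd F L M y) := by
  ext m
  have := leibniz_lie x y m
  rw [h, zero_lie, zero_add] at this
  exact this

lemma lie_pow_eq_zero {M : Type*} [AddCommGroup M] [Module F M] [LieRingModule L M]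
    [LieModule F L M] {x y : L} (h : ⁅x, y⁆ = 0) {u : M} (hu : ⁅x, u⁆ = 0) (m : ℕ) :
    ⁅x, (LieModule.toEnd F L M y ^ m) u⁆ = 0 := by
  have := congrArg (fun f => f u) ((toEnd_commute (F := F) (M := M) h).pow_right m).eq
  simp only [Module.End.mul_apply, LieModule.toEnd_apply_apply, hu, map_zero] at this
  exact this

/-- If `x` acts with `x ^ (m + 1) = x`, then `1 - x ^ m` projects onto the invariants of `x`. -/
lemma lie_sub_pow_self {M : Type*} [AddCommGroup M] [Module F M] [LieRingModule L M]
    [LieModule F L M] {x : L} {m : ℕ}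
    (h : LieModule.toEnd F L M x ^ (m + 1) = LieModule.toEnd F L M x) (u : M) :
    ⁅x, u - (LieModule.toEnd F L M x ^ m) u⁆ = 0 := by
  have h1 := congrArg (fun f => f u) h
  simp only [pow_succ', Module.End.mul_apply, LieModule.toEnd_apply_apply] at h1
  rw [lie_sub, h1, sub_self]

lemma lie_sub_pow {M : Type*} [AddCommGroup M] [Module F M] [LieRingModule L M]
    [LieModule F L M] {x y : L} (h : ⁅x, y⁆ = 0) {u : M} (hu : ⁅x, u⁆ = 0) (m : ℕ) :
    ⁅x, u - (LieModule.toEnd F L M y ^ m) u⁆ = 0 := by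
  rw [lie_sub, hu, lie_pow_eq_zero h hu, sub_zero]

end
end LieCoh

namespace TruncModel
open LieCoh
section
set_option linter.unusedSectionVars false
set_option linter.unusedSimpArgs false
variable {F A : Type*} [Field F] [CommRing A] [Algebra F A] {n q : ℕ}
variable (M : TruncModel F A (q + 5) n) [hp : Fact (q + 5).Prime] [CharP F (q + 5)]

local notation "L" => Derivation F A A

/-- The vector field `u` vanishes at the origin to second order. -/
def Sq2 (u : L) : Prop := ∀ l, M.ε (u (M.X l)) = 0 ∧ ∀ k, M.ε (M.D k (u (M.X l))) = 0

omit hp [CharP F (q + 5)] in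
lemma der_apply (u : L) (f : A) : u f = ∑ k, u (M.X k) * M.D k f := by
  conv_lhs => rw [M.decomp u]
  rw [sum_apply]; rfl

omit hp [CharP F (q + 5)] in
/-- A bracket with a field vanishing to second order vanishes at the origin. -/
lemma κ_lie_sq {y : L} (hy : M.Sq2 y) (u : L) (l : Fin n) : M.κ l ⁅y, u⁆ = 0 := by
  rw [κ_apply, Derivation.commutator_apply, map_sub, M.der_apply y (u (M.X l)), M.der_apply u (y (M.X l)), map_sum, map_sum,
    Finset.sum_eq_zero, Finset.sum_eq_zero, sub_zero]
  · intro k _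
    rw [map_mul, (hy l).2 k, mul_zero]
  · intro k _
    rw [map_mul, (hy k).1, zero_mul]

omit hp [CharP F (q + 5)] in
lemma sq2_smul {f : A} (k : Fin n) (h0 : M.ε f = 0) (h : ∀ l, M.ε (M.D l f) = 0) :
    M.Sq2 (f • M.D k) := by
  intro l
  simp only [Derivation.smul_apply, M.D_X, smul_eq_mul]
  split_ifs <;> simp [h0, h]

omit hp [CharP F (q + 5)] in
lemma κ_lie_t (j l : Fin n) (u : L) :
    M.κ l ⁅M.t j, u⁆ = if j = l then - M.κ l u else 0 := by
  rw [κ_apply, Derivation.commutator_apply, t, Derivation.smul_apply, Derivation.smul_apply, M.D_X,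
    κ_apply, smul_eq_mul, smul_eq_mul, map_sub, map_mul, M.ε_X]
  by_cases h : j = l
  · subst h; simp
  · simp [h, Ne.symm h]

omit hp [CharP F (q + 5)] in
lemma κ_lie_gl (i j l : Fin n) (u : L) :
    M.κ l ⁅M.X i • M.D j, u⁆ = if j = l then - M.κ i u else 0 := by
  rw [κ_apply, Derivation.commutator_apply, Derivation.smul_apply, Derivation.smul_apply, M.D_X,
    κ_apply, smul_eq_mul, smul_eq_mul, map_sub, map_mul, M.ε_X]
  by_cases h : j = l
  · subst h; simp
  · simp [h, Ne.symm h]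

lemma castqA (F A : Type*) [Field F] [CommRing A] [Algebra F A] {q : ℕ} [CharP F (q + 5)] :
    (q : A) = -5 := by
  have : ((q + 5 : ℕ) : A) = 0 := by
    rw [← map_natCast (algebraMap F A), CharP.cast_eq_zero, map_zero]
  push_cast at this
  linear_combination this

omit hp M in
lemma castq : (q : F) = -5 := by
  have := CharP.cast_eq_zero F (q + 5)
  push_cast at this
  linear_combination this

omit hp M in
lemma nz {m : ℕ} (h0 : 0 < m) (h : m < q + 5) : (m : F) ≠ 0 := by
  rw [Ne, CharP.cast_eq_zero_iff F (q + 5)]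
  exact fun hd => absurd (Nat.le_of_dvd h0 hd) (not_le.2 h)

omit hp M in
lemma cast_inj {a b : ℕ} (ha : a < q + 5) (hb : b < q + 5) (h : (a : F) = b) : a = b :=
  CharP.natCast_injOn_Iio F (q + 5) ha hb h

omit hp [CharP F (q + 5)] in
lemma mon_single (a : Fin n → ℕ) (i : Fin n) (h : ∀ m, m ≠ i → a m = 0) :
    M.mon a = M.X i ^ a i :=
  Fintype.prod_eq_single i fun m hm => by rw [h m hm, pow_zero]

omit hp [CharP F (q + 5)] in
lemma mon_two (a : Fin n → ℕ) {i j : Fin n} (hij : i ≠ j) (h : ∀ m, m ≠ i → m ≠ j → a m = 0) :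
    M.mon a = M.X i ^ a i * M.X j ^ a j :=
  Fintype.prod_eq_mul i j hij fun m hm => by rw [h m hm.1 hm.2, pow_zero]

omit hp [CharP F (q + 5)] in
lemma mon_three (a : Fin n → ℕ) {i j k : Fin n} (hij : i ≠ j) (hik : i ≠ k) (hjk : j ≠ k)
    (h : ∀ m, m ≠ i → m ≠ j → m ≠ k → a m = 0) :
    M.mon a = M.X i ^ a i * M.X j ^ a j * M.X k ^ a k := by
  rw [M.mon_eq a i, mul_assoc]
  congr 1
  have : ∏ m ∈ Finset.univ.erase i, M.X m ^ a m = ∏ m ∈ {j, k}, M.X m ^ a m := by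
    symm
    apply Finset.prod_subset
    · intro m hm
      simp only [Finset.mem_insert, Finset.mem_singleton] at hm
      rcases hm with rfl | rfl
      · simp [hij.symm]
      · simp [hik.symm]
    · intro m hm hm'
      simp only [Finset.mem_insert, Finset.mem_singleton, not_or, Finset.mem_erase] at hm hm'
      rw [h m hm.1 hm'.1 hm'.2, pow_zero]
  rw [this, Finset.prod_pair hjk]

omit hp [CharP F (q + 5)] in
lemma lie_t_apply_X (j l : Fin n) (u : L) :
    ⁅M.t j, u⁆ (M.X l) = M.X j * M.D j (u (M.X l)) - if j = l then u (M.X l) else 0 := by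
  rw [Derivation.commutator_apply, t, Derivation.smul_apply, Derivation.smul_apply, M.D_X,
    smul_eq_mul, smul_eq_mul]
  by_cases h : j = l
  · subst h; simp
  · simp [h, Ne.symm h]

/-- A torus-invariant derivation of `Der A` is `ad w` for some `w` in the torus. Subtracting a toral
`ad w` gives a derivation `g` that kills all `D k`; by induction on the degree, `g` then has constant
values, and a nonzero value on `X ^ a • D k` forces `X ^ a = X k * X l ^ (p - 1)` by weights. That
field is a bracket of two fields vanishing to second order, so its value is zero as well. -/
lemma der0 (h : L →ₗ[F] L) (hd : d h = 0) (ht : ∀ j, ⁅M.t j, h⁆ = 0) :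
    ∃ c : Fin n → F, h = LieModule.toEnd F L L (∑ k, c k • M.t k) := by
  classical
  set w : L := ∑ k, (- M.κ k (h (M.D k))) • M.t k with hw
  refine ⟨fun k => - M.κ k (h (M.D k)), ?_⟩
  rw [← hw, ← sub_eq_zero]
  set g := h - LieModule.toEnd F L L w with hg
  have htw : ∀ j, ⁅M.t j, w⁆ = 0 := by
    intro j
    rw [hw, lie_sum]
    exact Finset.sum_eq_zero fun k _ => by rw [lie_csmul, M.lie_t_t, smul_zero]
  have hwD : ∀ k, ⁅w, M.D k⁆ = M.κ k (h (M.D k)) • M.D k := by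
    intro k
    rw [hw, sum_lie, Finset.sum_eq_single k]
    · rw [csmul_lie, M.lie_t_D, if_pos rfl]; module
    · intro b _ hb
      rw [csmul_lie, M.lie_t_D, if_neg hb, smul_zero]
    · simp
  have gt : ∀ j u, g ⁅M.t j, u⁆ = ⁅M.t j, g u⁆ := by
    intro j u
    have h1 := congrArg (fun f : L →ₗ[F] L => f u) (ht j)
    simp only [lie_hom1, LinearMap.zero_apply] at h1
    simp only [hg, LinearMap.sub_apply, LieModule.toEnd_apply_apply, lie_sub]
    rw [← sub_eq_zero.1 h1, leibniz_lie (M.t j) w u, htw, zero_lie, zero_add]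
  have gd : ∀ x y, g ⁅x, y⁆ = ⁅x, g y⁆ - ⁅y, g x⁆ := by
    intro x y
    have : d g = 0 := by rw [hg, map_sub, hd, lie_d_toEnd, sub_zero]
    have := congrArg (fun f => f x y) this
    simp only [d_apply, LinearMap.zero_apply] at this
    exact (sub_eq_zero.1 this).symm
  have gκ : ∀ k, M.κ k (g (M.D k)) = 0 := by
    intro k
    rw [hg, LinearMap.sub_apply, LieModule.toEnd_apply_apply, hwD, map_sub, map_smul, κ_apply M k (M.D k),
      M.D_X_self]
    simp
  -- `g` kills the partial derivatives
  have wtD : ∀ k l j, M.X j * M.D j (g (M.D k) (M.X l)) =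
      ((if j = l then 1 else 0) - if j = k then 1 else 0 : A) * g (M.D k) (M.X l) := by
    intro k l j
    have h1 := congrArg (fun u : L => u (M.X l)) (gt j (M.D k))
    rw [M.lie_t_apply_X, M.lie_t_D] at h1
    rw [sub_mul, ite_mul, ite_mul, one_mul, zero_mul, ← sub_eq_iff_eq_add'.2 (eq_add_of_sub_eq h1.symm)]
    split_ifs <;> simp
  have hdiag : ∀ k, g (M.D k) (M.X k) = 0 := by
    intro k
    rw [M.weight_zero (f := g (M.D k) (M.X k)) (fun j => by rw [wtD]; simp), ← κ_apply, gκ, map_zero]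
  have gD : ∀ k, g (M.D k) = 0 := by
    intro k
    apply M.der_ext
    intro l
    rw [Derivation.zero_apply]
    by_cases hkl : k = l
    · subst hkl; exact hdiag k
    · have h1 := congrArg (fun u : L => u (M.X l)) (gd (M.D l) (M.D k))
      simp only [M.lie_D_D, map_zero, Derivation.zero_apply, Derivation.sub_apply,
        M.lie_D_apply_X, hdiag, sub_zero] at h1
      have h2 := wtD k l l
      rw [← h1, if_pos rfl, if_neg (Ne.symm hkl)] at h2
      simpa using h2.symm
  apply M.L_ext
  suffices H : ∀ N : ℕ, ∀ a : Fin n → ℕ, (∀ i, a i < q + 5) → ∑ i, a i = N → ∀ k, g (M.e a k) = 0 by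
    intro a ha k; rw [H _ a ha rfl k]; rfl
  intro N
  induction N with
  | zero =>
    intro a _ h0 k
    have : a = 0 := by
      funext i
      exact (Finset.sum_eq_zero_iff.1 h0) i (Finset.mem_univ i)
    rw [this, e_zero, gD]
  | succ N ih =>
    intro a ha hN k
    apply M.eq_zero_of_lie_D
    · intro i
      have h1 := gd (M.D i) (M.e a k)
      rw [gD, lie_zero, sub_zero, M.lie_D_e, map_smul] at h1
      rw [← h1]
      rcases Nat.eq_zero_or_pos (a i) with h0 | h0
      · simp [h0]
      · rw [ih, smul_zero]
        · intro m
          by_cases hm : m = i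
          · subst hm; simp; have := ha m; omega
          · simp [hm, ha]
        · rw [Finset.sum_update_of_mem (Finset.mem_univ i)]
          rw [← Finset.add_sum_erase _ _ (Finset.mem_univ i)] at hN
          rw [Finset.sdiff_singleton_eq_erase]
          omega
    · intro l
      by_contra hne
      have hwt : ∀ j, (a j : F) = (if j = k then 1 else 0) - if j = l then 1 else 0 := by
        intro j
        have h1 := congrArg (M.κ l) (gt j (M.e a k))
        rw [M.lie_t_e, map_smul, map_smul, κ_lie_t, smul_eq_mul, wt] at h1
        have h2 : (((a j : F) - (if j = k then 1 else 0)) + if j = l then 1 else 0) *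
            M.κ l (g (M.e a k)) = 0 := by
          rw [add_mul, h1]; split_ifs <;> simp
        have := (mul_eq_zero.1 h2).resolve_right hne
        linear_combination this
      by_cases hkl : k = l
      · subst hkl
        have : a = 0 := by
          funext j
          apply cast_inj (F := F) (ha j) (by simp)
          rw [hwt]; simp
        rw [this, e_zero, gD] at hne
        simp at hne
      · have e1 : a k = 1 := by
          apply cast_inj (F := F) (ha k) (by omega)
          rw [hwt]; simp [hkl]
        have e2 : a l = q + 4 := by
          apply cast_inj (F := F) (ha l) (by omega)
          rw [hwt]; simp [Ne.symm hkl, castq (F := F) (q := q)]; norm_num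
        have e3 : ∀ m, m ≠ k → m ≠ l → a m = 0 := by
          intro m h1 h2
          apply cast_inj (F := F) (ha m) (by omega)
          rw [hwt]; simp [h1, h2]
        have key : ⁅M.X l ^ 2 • M.D l, (M.X l ^ (q + 3) * M.X k) • M.D k⁆ =
            (-2 : F) • M.e a k := by
          rw [lie_smul_D, e, M.mon_two a hkl e3, e1, e2]
          simp [Derivation.leibniz, Derivation.leibniz_pow, M.D_X_self, M.D_X_ne hkl,
            M.D_X_ne (Ne.symm hkl), castqA F A (q := q)]
          match_scalars
          simp only [map_ofNat]
          ring
        have h3 := gd (M.X l ^ 2 • M.D l) ((M.X l ^ (q + 3) * M.X k) • M.D k)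
        rw [key, map_smul] at h3
        have h4 := congrArg (M.κ l) h3
        rw [map_sub, map_smul, κ_lie_sq, κ_lie_sq, sub_zero, smul_eq_mul] at h4
        · have : (2 : F) ≠ 0 := by exact_mod_cast nz (F := F) (q := q) (m := 2) (by omega) (by omega)
          exact (mul_ne_zero (neg_ne_zero.2 this) hne) h4
        · apply sq2_smul <;> simp [Derivation.leibniz, Derivation.leibniz_pow, M.ε_X]
        · apply sq2_smul <;> simp [Derivation.leibniz, Derivation.leibniz_pow, M.ε_X]

end
end TruncModel

/-! ### Making a cocycle vanish on the torus -/

namespace TruncModel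
open LieCoh
section
set_option linter.unusedSectionVars false
set_option linter.unusedSimpArgs false
variable {F A : Type*} [Field F] [CommRing A] [Algebra F A] {n q : ℕ}
variable (M : TruncModel F A (q + 5) n) [hp : Fact (q + 5).Prime] [CharP F (q + 5)]

local notation "L" => Derivation F A A
local notation "Hom1" => Derivation F A A →ₗ[F] Derivation F A A
local notation "Hom2" => Derivation F A A →ₗ[F] Derivation F A A →ₗ[F] Derivation F A A

lemma t_pow_hom1 (j : Fin n) :
    LieModule.toEnd F L Hom1 (M.t j) ^ (q + 5) = LieModule.toEnd F L Hom1 (M.t j) := by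
  refine LinearMap.ext fun φ => ?_
  rw [toEnd_hom_pow_p, M.adE_t_pow_p]
  ext1 x
  simp

lemma t_pow_hom2 (j : Fin n) :
    LieModule.toEnd F L Hom2 (M.t j) ^ (q + 5) = LieModule.toEnd F L Hom2 (M.t j) := by
  refine LinearMap.ext fun φ => ?_
  rw [toEnd_hom_pow_p, M.adE_t_pow_p, M.t_pow_hom1]
  ext1 x
  simp

lemma D_pow_hom1 (j : Fin n) :
    LieModule.toEnd F L Hom1 (M.D j) ^ (q + 5) = 0 := by
  refine LinearMap.ext fun φ => ?_
  rw [toEnd_hom_pow_p, M.adE_D_pow_p]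
  simp

lemma D_pow_hom2 (j : Fin n) :
    LieModule.toEnd F L Hom2 (M.D j) ^ (q + 5) = 0 := by
  refine LinearMap.ext fun φ => ?_
  rw [toEnd_hom_pow_p, M.adE_D_pow_p, M.D_pow_hom1]
  ext1 x
  simp

/-- Up to a coboundary a cocycle is torus-invariant: `T = t i` satisfies `T ^ p = T`, so
`ψ - T ^ (p - 1) ψ` is invariant, and `T ^ (p - 1) ψ` is a coboundary by `IsCoc.lie_eq`. -/
lemma stage_T1 {ψ : Hom2} (hψ : IsCoc ψ) : ∃ φ : Hom1, ∀ j, ⁅M.t j, ψ - d φ⁆ = 0 := by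
  classical
  suffices H : ∀ s : Finset (Fin n), ∃ φ : Hom1, ∀ j ∈ s, ⁅M.t j, ψ - d φ⁆ = 0 by
    obtain ⟨φ, h⟩ := H Finset.univ
    exact ⟨φ, fun j => h j (Finset.mem_univ j)⟩
  intro s
  induction s using Finset.induction_on with
  | empty => exact ⟨0, by simp⟩
  | insert i s _ ih =>
    obtain ⟨φ, hφ⟩ := ih
    set ψ0 := ψ - d φ with h0
    have hc : IsCoc ψ0 := hψ.sub (isCoc_d φ)
    let T := LieModule.toEnd F L Hom2 (M.t i)
    refine ⟨φ + (LieModule.toEnd F L Hom1 (M.t i) ^ (q + 3)) (ψ0 (M.t i)), ?_⟩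
    have e1 : ψ - d (φ + (LieModule.toEnd F L Hom1 (M.t i) ^ (q + 3)) (ψ0 (M.t i))) =
        ψ0 - (T ^ (q + 4)) ψ0 := by
      have e2 : (T ^ (q + 4)) ψ0 = (T ^ (q + 3)) ⁅M.t i, ψ0⁆ := by
        rw [pow_succ, Module.End.mul_apply]; rfl
      rw [map_add, d_pow, ← hc.lie_eq, e2, h0]
      exact (sub_sub ψ (d φ) _).symm
    intro j hj
    rw [e1]
    rcases Finset.mem_insert.1 hj with rfl | hj
    · exact lie_sub_pow_self (M.t_pow_hom2 j) ψ0
    · exact lie_sub_pow (M.lie_t_t j i) (hφ j hj) _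

/-- A torus-invariant cocycle is cohomologous to one vanishing on the torus: each `ψ (t i)` is a
torus-invariant derivation, hence `ad w_i` with `w_i` in the torus, and the cochain
`u ↦ ∑ i, (∂ u_i / ∂ X i)(0) • w_i` is invariant with value `w_i` at `t i`. -/
lemma stage_T2 {ψ : Hom2} (hψ : IsCoc ψ) (ht : ∀ j, ⁅M.t j, ψ⁆ = 0) :
    ∃ φ : Hom1, ∀ j, (ψ - d φ) (M.t j) = 0 := by
  have H : ∀ i, ∃ c : Fin n → F, ψ (M.t i) = LieModule.toEnd F L L (∑ k, c k • M.t k) := by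
    intro i
    refine M.der0 _ ?_ ?_
    · rw [← hψ.lie_eq, ht]
    · intro j
      ext1 x
      have h2 := congrArg (fun f : Hom2 => f (M.t i) x) (ht j)
      simp only [lie_hom2, M.lie_t_t] at h2
      simpa [lie_hom1] using h2
  choose c hc using H
  let φ : Hom1 := ∑ i, (((M.ε : A →ₗ[F] F) ∘ₗ (M.D i : A →ₗ[F] A) ∘ₗ
    { toFun := fun u : L => u (M.X i), map_add' := by simp, map_smul' := by simp }).smulRight
      (∑ k, c i k • M.t k))
  have hφ : ∀ u, φ u = ∑ i, M.ε (M.D i (u (M.X i))) • ∑ k, c i k • M.t k := by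
    intro u; simp [φ]
  have htor : ∀ j u, ⁅M.t j, φ u⁆ = 0 := by
    intro j u
    rw [hφ, lie_sum]
    refine Finset.sum_eq_zero fun i _ => ?_
    rw [lie_csmul, lie_sum, Finset.sum_eq_zero, smul_zero]
    intro k _
    rw [lie_csmul, M.lie_t_t, smul_zero]
  have hφt : ∀ j, φ (M.t j) = ∑ k, c j k • M.t k := by
    intro j
    rw [hφ, Finset.sum_eq_single j]
    · simp [t, M.D_X_self]
    · intro b _ hb
      simp [t, M.D_X_ne hb]
    · simp
  refine ⟨φ, fun j => ?_⟩
  rw [LinearMap.sub_apply, hc, d_apply_eq, hφt, sub_eq_zero]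
  have : ⁅M.t j, φ⁆ = 0 := by
    ext1 u
    rw [lie_hom1, htor, zero_sub, hφ, LinearMap.zero_apply, neg_eq_zero]
    refine Finset.sum_eq_zero fun i _ => ?_
    rw [M.lie_t_apply_X, map_sub]
    split_ifs with h
    · subst h
      simp [M.D_X_self, M.ε_X]
    · simp [M.ε_X, M.D_X, h]
  rw [this, zero_add]

end
end TruncModel

/-! ### Making a cocycle vanish on the partial derivatives -/

namespace TruncModel
open LieCoh
section
set_option linter.unusedSectionVars false
set_option linter.unusedSimpArgs false
variable {F A : Type*} [Field F] [CommRing A] [Algebra F A] {n q : ℕ}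
variable (M : TruncModel F A (q + 5) n) [hp : Fact (q + 5).Prime] [CharP F (q + 5)]

local notation "L" => Derivation F A A
local notation "Hom1" => Derivation F A A →ₗ[F] Derivation F A A
local notation "Hom2" => Derivation F A A →ₗ[F] Derivation F A A →ₗ[F] Derivation F A A

omit M hp [CharP F (q + 5)] in
lemma lie_smul_hom (u : L) (f : A) (φ : Hom1) : ⁅u, f • φ⁆ = u f • φ + f • ⁅u, φ⁆ := by
  refine LinearMap.ext fun v => ?_
  simp only [lie_hom1, LinearMap.smul_apply, LinearMap.add_apply, smul_sub]
  ext x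
  simp only [Derivation.commutator_apply, Derivation.smul_apply, Derivation.sub_apply,
    Derivation.add_apply, Derivation.leibniz, smul_eq_mul]
  ring

omit M hp [CharP F (q + 5)] in
lemma lie_csmul_hom (u : L) (c : F) (φ : Hom1) : ⁅u, c • φ⁆ = c • ⁅u, φ⁆ := lie_smul c u φ

/-- If `ψ` vanishes on the torus and on `D j` for `j ∈ s`, it is cohomologous to a cocycle that also
vanishes on `D i`. A primitive is found by integrating `g = ψ (D i)` along `X i`: the cochain
`∑_{k < p - 1} (-1) ^ k X i ^ (k + 1) / (k + 1)! • (ad D i) ^ k g` is mapped by `D i` to `g` up to a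
multiple of `X i ^ (p - 1) • (ad D i) ^ (p - 1) g`. Because `(ad D i) ^ p ψ = 0`, the cochain
`(ad D i) ^ (p - 1) g` is a torus-invariant derivation, hence `ad w` with `w` toral, and the remaining
term is compensated by a multiple of `u ↦ (u (X i) * X i ^ (p - 1)) • w`. -/
lemma stage_D {ψ : Hom2} (hψ : IsCoc ψ) (ht : ∀ j, ψ (M.t j) = 0) (s : Finset (Fin n))
    (hs : ∀ j ∈ s, ψ (M.D j) = 0) (i : Fin n) (hi : i ∉ s) :
    ∃ φ : Hom1, (∀ j, (ψ - d φ) (M.t j) = 0) ∧ (∀ j ∈ s, (ψ - d φ) (M.D j) = 0) ∧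
      (ψ - d φ) (M.D i) = 0 := by
  classical
  set g : Hom1 := ψ (M.D i) with hg
  set T := LieModule.toEnd F L Hom1 (M.D i) with hT
  let G : ℕ → Hom1 := fun k => (T ^ k) g
  have G0 : G 0 = g := rfl
  have Gs : ∀ k, G (k + 1) = ⁅M.D i, G k⁆ := by
    intro k
    simp only [G]
    rw [pow_succ', Module.End.mul_apply]; rfl
  have Gp : d (G (q + 4)) = 0 := by
    simp only [G, hT]
    rw [d_pow, hg, ← hψ.lie_eq]
    have := congrArg (fun f => f ψ) (M.D_pow_hom2 i)
    simp only [pow_succ, Module.End.mul_apply, LinearMap.zero_apply,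
      LieModule.toEnd_apply_apply] at this ⊢
    exact this
  have inv : ∀ z : L, ψ z = 0 → ⁅z, g⁆ = ψ ⁅z, M.D i⁆ := by
    intro z hz
    have h1 : ⁅z, ψ⁆ = 0 := by rw [hψ.lie_eq, hz, map_zero]
    refine LinearMap.ext fun x => ?_
    have h2 := congrArg (fun f : Hom2 => f (M.D i) x) h1
    simp only [lie_hom2, LinearMap.zero_apply] at h2
    rw [lie_hom1, hg]
    rw [sub_right_comm] at h2
    exact sub_eq_zero.1 h2
  have Gt : ∀ k j, ⁅M.t j, G k⁆ = if j = i then (-(k + 1) : F) • G k else 0 := by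
    intro k
    induction k with
    | zero =>
      intro j
      rw [G0, inv _ (ht j), M.lie_t_D]
      split_ifs with h
      · subst h; rw [map_neg, Nat.cast_zero, zero_add, hg]; exact (neg_one_smul F _).symm
      · simp
    | succ k ih =>
      intro j
      rw [Gs, leibniz_lie, M.lie_t_D, ih]
      split_ifs with h
      · subst h; rw [neg_lie, lie_csmul_hom]; push_cast; module
      · simp
  have GD : ∀ k, ∀ j ∈ s, ⁅M.D j, G k⁆ = 0 := by
    intro k j hj
    induction k with
    | zero => rw [G0, inv _ (hs j hj), M.lie_D_D, map_zero]
    | succ k ih => rw [Gs, leibniz_lie, M.lie_D_D, ih]; simp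
  have GaD : ∀ k, ∀ j ∈ insert i s, G k (M.D j) = 0 := by
    intro k j hj
    induction k with
    | zero =>
      rw [G0, hg]
      rcases Finset.mem_insert.1 hj with rfl | hj
      · exact hψ.alt _
      · rw [hψ.skew, hs j hj]; simp
    | succ k ih => rw [Gs, lie_hom1, ih, M.lie_D_D]; simp
  have Gat : ∀ k j, G k (M.t j) = 0 := by
    intro k j
    induction k with
    | zero => rw [G0, hg, hψ.skew, ht]; simp
    | succ k ih =>
      rw [Gs, lie_hom1, ih, lie_zero, ← lie_skew (M.D i) (M.t j), M.lie_t_D]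
      split_ifs <;> simp [GaD k i (Finset.mem_insert_self i s)]
  -- `G (p - 1)` has weight `-p = 0`
  obtain ⟨c, hc⟩ := M.der0 (G (q + 4)) Gp (by
    intro j
    rw [Gt]
    split_ifs
    · have := castq (F := F) (q := q)
      push_cast; rw [this]; norm_num
    · rfl)
  set w := ∑ k, c k • M.t k with hw
  have hwD : ∀ j ∈ insert i s, ⁅M.D j, w⁆ = 0 := by
    intro j hj
    have := GaD (q + 4) j hj
    rw [hc, LieModule.toEnd_apply_apply] at this
    rw [← lie_skew, this, neg_zero]
  have htw : ∀ j, ⁅M.t j, w⁆ = 0 := by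
    intro j
    rw [hw, lie_sum]
    exact Finset.sum_eq_zero fun k _ => by rw [lie_csmul, M.lie_t_t, smul_zero]
  -- truncations of the formal primitive of `g` along `X i`
  let P : ℕ → Hom1 := fun m => ∑ k ∈ Finset.range m,
    ((-1) ^ k * (((k + 1).factorial : ℕ) : F)⁻¹) • (M.X i ^ (k + 1) • G k)
  have PD : ∀ m, m < q + 5 → ⁅M.D i, P m⁆ =
      g - ((-1) ^ m * ((m.factorial : ℕ) : F)⁻¹) • (M.X i ^ m • G m) := by
    intro m
    induction m with
    | zero => intro _; simp [P, G0]
    | succ m ih =>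
      intro hm
      have h0 : P (m + 1) = P m + ((-1) ^ m * (((m + 1).factorial : ℕ) : F)⁻¹) •
        (M.X i ^ (m + 1) • G m) := Finset.sum_range_succ _ _
      have hm1 : ((m : F) + 1) ≠ 0 := by exact_mod_cast nz (F := F) (q := q) (Nat.succ_pos m) hm
      have h2 : (((m + 1).factorial : ℕ) : F)⁻¹ = ((m : F) + 1)⁻¹ * ((m.factorial : ℕ) : F)⁻¹ := by
        rw [Nat.factorial_succ]; push_cast; rw [mul_inv]
      have h3 : M.D i (M.X i ^ (m + 1)) = ((m : F) + 1) • M.X i ^ m := by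
        simp [Derivation.leibniz_pow, M.D_X_self, Algebra.smul_def]
      have h5 : (((m : F) + 1) • M.X i ^ m) • G m = ((m : F) + 1) • (M.X i ^ m • G m) :=
        smul_assoc _ _ _
      rw [h0, lie_add, ih (by omega), lie_csmul_hom, lie_smul_hom, ← Gs, h2, h3, h5, smul_add,
        smul_smul]
      have h4 : (-1 : F) ^ m * (((m : F) + 1)⁻¹ * ((m.factorial : ℕ) : F)⁻¹) * ((m : F) + 1) =
          (-1) ^ m * ((m.factorial : ℕ) : F)⁻¹ := by
        field_simp
      rw [h4, pow_succ (-1 : F) m]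
      module
  set c0 : F := (-1) ^ (q + 4) * (((q + 4).factorial : ℕ) : F)⁻¹ with hc0
  -- `φ1` absorbs the term `X i ^ (p - 1) • ad w` left over by the primitive
  let φ1 : Hom1 :=
    { toFun := fun u => c0 • ((u (M.X i) * M.X i ^ (q + 4)) • w)
      map_add' := by intro u v; simp [add_mul, add_smul]
      map_smul' := by
        intro r u
        rw [Derivation.smul_apply, smul_mul_assoc, smul_assoc, smul_comm]; rfl }
  have φ_ap : ∀ u, φ1 u = c0 • ((u (M.X i) * M.X i ^ (q + 4)) • w) := fun _ => rfl
  have Xp : M.X i * M.X i ^ (q + 4) = 0 := by rw [← pow_succ', M.X_pow]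
  have Pap : ∀ u, P (q + 4) u = ∑ k ∈ Finset.range (q + 4),
      ((-1) ^ k * (((k + 1).factorial : ℕ) : F)⁻¹) • (M.X i ^ (k + 1) • G k u) := by
    intro u; simp [P]
  have key : ∀ z : L, ψ z = 0 → ⁅z, P (q + 4) + φ1⁆ = 0 → P (q + 4) z = 0 → φ1 z = 0 →
      (ψ - d (P (q + 4) + φ1)) z = 0 := by
    intro z h1 h2 h3 h4
    rw [LinearMap.sub_apply, d_apply_eq, h1, h2, LinearMap.add_apply, h3, h4]
    simp
  have wt0 : ∀ k ≠ i, φ1 (M.D k) = 0 := by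
    intro k hk
    simp [φ_ap, M.D_X, hk.symm]
  have φ_lie : ∀ z u : L, ⁅z, w⁆ = 0 → ⁅z, φ1⁆ u =
      c0 • ((z (u (M.X i) * M.X i ^ (q + 4)) - ⁅z, u⁆ (M.X i) * M.X i ^ (q + 4)) • w) := by
    intro z u hz
    rw [lie_hom1, φ_ap, φ_ap, lie_csmul, lie_smul_right, hz, smul_zero, zero_add, sub_smul, smul_sub]
  have lieP : ∀ z : L, ⁅z, P (q + 4)⁆ = ∑ k ∈ Finset.range (q + 4),
      ((-1) ^ k * (((k + 1).factorial : ℕ) : F)⁻¹) •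
        (z (M.X i ^ (k + 1)) • G k + M.X i ^ (k + 1) • ⁅z, G k⁆) := by
    intro z
    simp only [P]
    rw [lie_sum]
    exact Finset.sum_congr rfl fun k _ => by rw [lie_csmul_hom, lie_smul_hom]
  refine ⟨P (q + 4) + φ1, ?_, ?_, ?_⟩
  · intro j
    refine key _ (ht j) ?_ ?_ ?_
    · rw [lie_add]
      have h1 : ⁅M.t j, P (q + 4)⁆ = 0 := by
        rw [lieP]
        refine Finset.sum_eq_zero fun k _ => ?_
        rw [Gt]
        split_ifs with h
        · subst h
          have h5 : M.t j (M.X j ^ (k + 1)) = ((k : F) + 1) • M.X j ^ (k + 1) := by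
            simp [t, Derivation.leibniz_pow, M.D_X_self, Algebra.smul_def]; ring
          have h6 : (((k : F) + 1) • M.X j ^ (k + 1)) • G k =
              ((k : F) + 1) • (M.X j ^ (k + 1) • G k) := smul_assoc _ _ _
          have h7 : M.X j ^ (k + 1) • ((-(k + 1) : F) • G k) =
              (-(k + 1) : F) • (M.X j ^ (k + 1) • G k) := smul_comm _ _ _
          rw [h5, h6, h7]
          module
        · simp [t, Derivation.leibniz_pow, M.D_X, Ne.symm h]
      have h2 : ⁅M.t j, φ1⁆ = 0 := by
        refine LinearMap.ext fun u => ?_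
        rw [φ_lie _ _ (htw j)]
        have : M.t j (u (M.X i) * M.X i ^ (q + 4)) - ⁅M.t j, u⁆ (M.X i) * M.X i ^ (q + 4) = 0 := by
          rw [M.lie_t_apply_X]
          by_cases h : i = j
          · subst h
            simp [t, Derivation.leibniz, Derivation.leibniz_pow, M.D_X_self, castqA F A (q := q)]
            ring
          · simp [t, Derivation.leibniz, Derivation.leibniz_pow, M.D_X_ne h, Ne.symm h]
            ring
        rw [this]; simp
      rw [h1, h2, add_zero]
    · rw [Pap]
      exact Finset.sum_eq_zero fun k _ => by rw [Gat, smul_zero, smul_zero]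
    · rw [φ_ap]
      by_cases h : i = j
      · subst h
        simp [t, M.D_X_self, Xp]
      · simp [t, M.D_X_ne h]
  · intro j hj
    have hji : j ≠ i := fun h => hi (h ▸ hj)
    refine key _ (hs j hj) ?_ ?_ (wt0 j hji)
    · rw [lie_add]
      have h1 : ⁅M.D j, P (q + 4)⁆ = 0 := by
        rw [lieP]
        refine Finset.sum_eq_zero fun k _ => ?_
        rw [GD k j hj]
        simp [Derivation.leibniz_pow, M.D_X_ne hji.symm]
      have h2 : ⁅M.D j, φ1⁆ = 0 := by
        refine LinearMap.ext fun u => ?_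
        rw [φ_lie _ _ (hwD j (Finset.mem_insert_of_mem hj)), M.lie_D_apply_X]
        simp [Derivation.leibniz_pow, M.D_X_ne hji.symm, mul_comm]
      rw [h1, h2, add_zero]
    · rw [Pap]
      exact Finset.sum_eq_zero fun k _ => by
        rw [GaD k j (Finset.mem_insert_of_mem hj), smul_zero, smul_zero]
  · have h1 : P (q + 4) (M.D i) = 0 := by
      rw [Pap]
      exact Finset.sum_eq_zero fun k _ => by
        rw [GaD k i (Finset.mem_insert_self i s), smul_zero, smul_zero]
    have h2 : φ1 (M.D i) = c0 • (M.X i ^ (q + 4) • w) := by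
      rw [φ_ap, M.D_X_self, one_mul]
    rw [LinearMap.sub_apply, d_apply_eq, lie_add, PD _ (by omega), LinearMap.add_apply, h1, h2,
      zero_add, hc, ← hg]
    refine LinearMap.ext fun u => ?_
    simp only [LinearMap.sub_apply, LinearMap.add_apply, LinearMap.smul_apply, LinearMap.zero_apply,
      LieModule.toEnd_apply_apply]
    rw [φ_lie _ _ (hwD i (Finset.mem_insert_self i s)), M.lie_D_apply_X, csmul_lie, lie_smul_left]
    have h3 : u (M.X i ^ (q + 4)) = M.D i (M.X i ^ (q + 4)) * u (M.X i) := by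
      simp [Derivation.leibniz_pow, M.D_X_self, mul_assoc]
    rw [h3, Derivation.leibniz, smul_eq_mul, smul_eq_mul]
    rw [← hc0]
    module

end
end TruncModel

/-! ### The squaring cocycle -/

namespace LieCoh
section
set_option linter.unusedSectionVars false
set_option linter.unusedSimpArgs false
variable {F L : Type*} [Field F] [LieRing L] [LieAlgebra F L]

open Finset in
/-- The sum of `f a b c` over all `a + b + c = m`. -/
def triSum {N : Type*} [AddCommMonoid N] (m : ℕ) (f : ℕ → ℕ → ℕ → N) : N :=
  ∑ s ∈ HasAntidiagonal.antidiagonal m, ∑ t ∈ HasAntidiagonal.antidiagonal s.1, f t.1 t.2 s.2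

open Finset in
lemma triSum_swap23 {N : Type*} [AddCommMonoid N] (m : ℕ) (f : ℕ → ℕ → ℕ → N) :
    triSum m (fun a b c => f a c b) = triSum m f := by
  unfold triSum
  rw [sum_sigma', sum_sigma']
  refine sum_nbij' (fun s => ⟨(s.2.1 + s.1.2, s.2.2), (s.2.1, s.1.2)⟩)
    (fun s => ⟨(s.2.1 + s.1.2, s.2.2), (s.2.1, s.1.2)⟩) ?_ ?_ ?_ ?_ ?_
  all_goals
    rintro ⟨⟨a, b⟩, ⟨c, e⟩⟩ h
    simp only [mem_sigma, HasAntidiagonal.mem_antidiagonal] at h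
    obtain ⟨rfl, rfl⟩ := h
  · simp; omega
  · simp; omega
  · rfl
  · rfl
  · rfl

open Finset in
lemma triSum_swap12 {N : Type*} [AddCommMonoid N] (m : ℕ) (f : ℕ → ℕ → ℕ → N) :
    triSum m (fun a b c => f b a c) = triSum m f := by
  unfold triSum
  refine sum_congr rfl fun s _ => ?_
  exact Nat.sum_antidiagonal_swap (f := fun t => f t.1 t.2 s.2)

/-- The divided power `γ ^ k / k!`; it is zero for `k ≥ p` since `k!` then vanishes in `F`. -/
def dp (γ : L →ₗ[F] L) (k : ℕ) : L →ₗ[F] L := ((k.factorial : ℕ) : F)⁻¹ • γ ^ k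

open Finset in
/-- The squaring of `γ`, with the (vanishing) terms for the indices `0` and `p` included. -/
def sqHom (p : ℕ) (γ : L →ₗ[F] L) : L →ₗ[F] L →ₗ[F] L :=
  ∑ s ∈ HasAntidiagonal.antidiagonal p, (LieModule.toEnd F L L : L →ₗ[F] L →ₗ[F] L).compl₁₂ (dp γ s.1) (dp γ s.2)

open Finset in
lemma sqHom_apply (p : ℕ) (γ : L →ₗ[F] L) (x y : L) :
    sqHom p γ x y = ∑ s ∈ HasAntidiagonal.antidiagonal p, ⁅dp γ s.1 x, dp γ s.2 y⁆ := by
  simp [sqHom]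

lemma dp_zero (γ : L →ₗ[F] L) (x : L) : dp γ 0 x = x := by simp [dp]

variable (p : ℕ) [hp : Fact p.Prime] [CharP F p]

lemma dp_p (γ : L →ₗ[F] L) (x : L) : dp γ p x = 0 := by
  have : ((p.factorial : ℕ) : F) = 0 :=
    (CharP.cast_eq_zero_iff F p _).2 (Nat.dvd_factorial hp.out.pos le_rfl)
  simp [dp, this]

omit hp in
lemma nz_cast {k : ℕ} (h0 : 0 < k) (hk : k < p) : (k : F) ≠ 0 := fun h =>
  absurd (Nat.le_of_dvd h0 ((CharP.cast_eq_zero_iff F p k).1 h)) (by omega)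

omit hp in
lemma dp_succ (γ : L →ₗ[F] L) {k : ℕ} (hk : k + 1 < p) (x : L) :
    ((k + 1 : ℕ) : F) • dp γ (k + 1) x = γ (dp γ k x) := by
  have h1 := nz_cast (F := F) p (Nat.succ_pos k) hk
  simp only [dp, LinearMap.smul_apply, map_smul, pow_succ', Module.End.mul_apply, smul_smul]
  congr 1
  rw [Nat.factorial_succ, Nat.cast_mul, mul_inv, ← mul_assoc, mul_inv_cancel₀ h1, one_mul]

omit hp in
open Finset in
/-- Leibniz rule for divided powers of a derivation. -/
lemma dp_lie {γ : L →ₗ[F] L} (hγ : ∀ x y, γ ⁅x, y⁆ = ⁅γ x, y⁆ + ⁅x, γ y⁆) {k : ℕ} (hk : k < p)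
    (x y : L) : dp γ k ⁅x, y⁆ = ∑ s ∈ HasAntidiagonal.antidiagonal k, ⁅dp γ s.1 x, dp γ s.2 y⁆ := by
  induction k with
  | zero => simp [dp_zero]
  | succ k ih =>
    have h1 := nz_cast (F := F) p (Nat.succ_pos k) hk
    have ih := ih (by omega)
    refine (smul_right_injective L h1) ?_
    simp only
    rw [dp_succ p γ hk, ih, map_sum]
    simp only [hγ]
    have e1 : ∀ s ∈ HasAntidiagonal.antidiagonal (k + 1), ((k + 1 : ℕ) : F) • ⁅dp γ s.1 x, dp γ s.2 y⁆ =
        (s.1 : F) • ⁅dp γ s.1 x, dp γ s.2 y⁆ + (s.2 : F) • ⁅dp γ s.1 x, dp γ s.2 y⁆ := by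
      intro s hs
      rw [← HasAntidiagonal.mem_antidiagonal.1 hs, Nat.cast_add, add_smul]
    rw [smul_sum, sum_congr rfl e1, sum_add_distrib, sum_add_distrib,
      Nat.sum_antidiagonal_succ (f := fun s => (s.1 : F) • ⁅dp γ s.1 x, dp γ s.2 y⁆),
      Nat.sum_antidiagonal_succ' (f := fun s => (s.2 : F) • ⁅dp γ s.1 x, dp γ s.2 y⁆)]
    simp only [Nat.cast_zero, zero_smul, zero_add]
    congr 1
    · refine sum_congr rfl fun s hs => ?_
      have := HasAntidiagonal.mem_antidiagonal.1 hs
      rw [← dp_succ p γ (by omega), smul_lie]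
    · refine sum_congr rfl fun s hs => ?_
      have := HasAntidiagonal.mem_antidiagonal.1 hs
      rw [← dp_succ p γ (by omega), lie_smul]

open Finset in
/-- Both ways of inserting one bracket into the squaring combine into a symmetric triple sum. The
Leibniz rule `dp_lie` fails at `k = p`, where `dp γ p = 0`; the missing `p`-th term is supplied by
`⁅sqHom p γ x y, z⁆`. -/
lemma sqHom_lie {γ : L →ₗ[F] L} (hγ : ∀ x y, γ ⁅x, y⁆ = ⁅γ x, y⁆ + ⁅x, γ y⁆) (x y z : L) :
    sqHom p γ ⁅x, y⁆ z + ⁅sqHom p γ x y, z⁆ =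
      triSum p fun a b c => ⁅⁅dp γ a x, dp γ b y⁆, dp γ c z⁆ := by
  obtain ⟨m, rfl⟩ : ∃ m, p = m + 1 := ⟨p - 1, by have := hp.out.pos; omega⟩
  rw [sqHom_apply, sqHom_apply, triSum, Nat.sum_antidiagonal_succ', Nat.sum_antidiagonal_succ'
    (f := fun s => ∑ t ∈ HasAntidiagonal.antidiagonal s.1, ⁅⁅dp γ t.1 x, dp γ t.2 y⁆, dp γ s.2 z⁆)]
  rw [dp_p, zero_lie, zero_add, add_comm]
  congr 1
  · simp only [dp_zero, sum_lie]
  · refine sum_congr rfl fun s hs => ?_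
    have := HasAntidiagonal.mem_antidiagonal.1 hs
    rw [dp_lie (m + 1) hγ (by omega), sum_lie]

open Finset in
/-- The squaring of a derivation is a 2-cocycle: by `sqHom_lie` the cocycle identity is the Jacobi
identity summed over `a + b + c = p`. -/
theorem isCoc_sqHom (h2 : (2 : F) ≠ 0) {γ : L →ₗ[F] L}
    (hγ : ∀ x y, γ ⁅x, y⁆ = ⁅γ x, y⁆ + ⁅x, γ y⁆) :
    IsCoc (sqHom p γ) where
  alt x := by
    have h : sqHom p γ x x = - sqHom p γ x x := by
      conv_lhs => rw [sqHom_apply, ← Nat.sum_antidiagonal_swap]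
      rw [sqHom_apply, ← sum_neg_distrib]
      exact sum_congr rfl fun s _ => by rw [lie_skew]; rfl
    have h3 : (2 : F) • sqHom p γ x x = 0 := by
      rw [two_smul]; nth_rw 1 [h]; simp
    exact (smul_eq_zero.1 h3).resolve_left h2
  coc x y z := by
    have h1 := sqHom_lie p hγ x y z
    have h2 := sqHom_lie p hγ x z y
    have h3 := sqHom_lie p hγ y z x
    rw [← triSum_swap23] at h2
    rw [← triSum_swap23, ← triSum_swap12] at h3
    have h4 : triSum p (fun a b c => ⁅⁅dp γ a x, dp γ b y⁆, dp γ c z⁆) -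
        triSum p (fun a b c => ⁅⁅dp γ a x, dp γ c z⁆, dp γ b y⁆) +
        triSum p (fun a b c => ⁅⁅dp γ b y, dp γ c z⁆, dp γ a x⁆) = 0 := by
      unfold triSum
      rw [← sum_sub_distrib, ← sum_add_distrib]
      refine sum_eq_zero fun s _ => ?_
      rw [← sum_sub_distrib, ← sum_add_distrib]
      refine sum_eq_zero fun t _ => ?_
      beta_reduce
      rw [lie_lie (dp γ t.1 x) (dp γ t.2 y) (dp γ s.2 z),
        ← lie_skew (dp γ t.2 y) ⁅dp γ t.1 x, dp γ s.2 z⁆,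
        ← lie_skew (dp γ t.1 x) ⁅dp γ t.2 y, dp γ s.2 z⁆]
      abel
    rw [← h1, ← h2, ← h3] at h4
    rw [← lie_skew x, ← lie_skew y, ← lie_skew z, ← neg_zero, ← h4]
    abel

end
end LieCoh

/-! ### Squares of the partial derivatives -/

namespace TruncModel
open LieCoh
section
set_option linter.unusedSectionVars false
set_option linter.unusedSimpArgs false
variable {F A : Type*} [Field F] [CommRing A] [Algebra F A] {n q : ℕ}
variable (M : TruncModel F A (q + 5) n) [hp : Fact (q + 5).Prime] [CharP F (q + 5)]

local notation "L" => Derivation F A A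
local notation "Hom1" => Derivation F A A →ₗ[F] Derivation F A A
local notation "Hom2" => Derivation F A A →ₗ[F] Derivation F A A →ₗ[F] Derivation F A A

/-- Every 2-cocycle is cohomologous to one vanishing on the torus and on all `D i`. -/
lemma stage1 {ψ : Hom2} (hψ : IsCoc ψ) :
    ∃ φ : Hom1, (∀ j, (ψ - d φ) (M.t j) = 0) ∧ ∀ j, (ψ - d φ) (M.D j) = 0 := by
  classical
  have comb : ∀ φ φ' : Hom1, ψ - d φ - d φ' = ψ - d (φ + φ') := by
    intro φ φ'
    rw [map_add]
    exact sub_sub ψ (d φ) (d φ')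
  suffices H : ∀ s : Finset (Fin n), ∃ φ : Hom1, (∀ j, (ψ - d φ) (M.t j) = 0) ∧
      ∀ j ∈ s, (ψ - d φ) (M.D j) = 0 by
    obtain ⟨φ, h, h'⟩ := H Finset.univ
    exact ⟨φ, h, fun j => h' j (Finset.mem_univ j)⟩
  intro s
  induction s using Finset.induction_on with
  | empty =>
    obtain ⟨φ, h⟩ := M.stage_T1 hψ
    obtain ⟨φ', h'⟩ := M.stage_T2 (hψ.sub (isCoc_d φ)) h
    rw [comb] at h'
    exact ⟨φ + φ', h', by simp⟩
  | insert i s hi ih =>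
    obtain ⟨φ, h1, h2⟩ := ih
    obtain ⟨φ', h1', h2', h3'⟩ := M.stage_D (hψ.sub (isCoc_d φ)) h1 s h2 i hi
    rw [comb] at h1' h2' h3'
    refine ⟨φ + φ', h1', fun j hj => ?_⟩
    rcases Finset.mem_insert.1 hj with rfl | hj
    · exact h3'
    · exact h2' j hj

/-- The cocycle `Sq (D i)`. -/
def Sq (i : Fin n) : Hom2 := sqHom (q + 5) (adE (M.D i))

lemma isCoc_Sq (i : Fin n) : IsCoc (M.Sq i) := by
  refine isCoc_sqHom (q + 5) ?_ ?_
  · exact_mod_cast nz (F := F) (q := q) (m := 2) (by omega) (by omega)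
  · intro x y
    exact leibniz_lie (M.D i) x y

omit hp [CharP F (q + 5)] in
lemma dp_big {i : Fin n} {x : L} (k : ℕ) (h : ⁅M.D i, ⁅M.D i, ⁅M.D i, x⁆⁆⁆ = 0) :
    dp (adE (M.D i)) (k + 3) x = 0 := by
  have : (adE (M.D i) ^ (k + 3)) x = (adE (M.D i) ^ k) ⁅M.D i, ⁅M.D i, ⁅M.D i, x⁆⁆⁆ := by
    rw [pow_add, Module.End.mul_apply]; rfl
  rw [dp, LinearMap.smul_apply, this, h, map_zero, smul_zero]

open Finset in
lemma Sq_apply {i : Fin n} {x : L} (h : ⁅M.D i, ⁅M.D i, ⁅M.D i, x⁆⁆⁆ = 0) (y : L) :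
    M.Sq i x y = ⁅⁅M.D i, x⁆, dp (adE (M.D i)) (q + 4) y⁆ +
      ⁅dp (adE (M.D i)) 2 x, dp (adE (M.D i)) (q + 3) y⁆ := by
  rw [Sq, sqHom_apply, Nat.sum_antidiagonal_succ, Nat.sum_antidiagonal_succ,
    Nat.sum_antidiagonal_succ, sum_eq_zero]
  · have : dp (adE (M.D i)) 1 x = ⁅M.D i, x⁆ := by simp [dp]
    have h0 : dp (adE (M.D i)) (q + 4 + 1) y = 0 := dp_p (q + 5) _ _
    simp [this, h0]
  · intro s _
    rw [M.dp_big _ h, zero_lie]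

lemma Sq_D (i j : Fin n) : M.Sq i (M.D j) = 0 := by
  refine LinearMap.ext fun y => ?_
  rw [M.Sq_apply (by simp [M.lie_D_D])]
  rw [M.lie_D_D]
  have : dp (adE (M.D i)) 2 (M.D j) = 0 := by
    simp [dp, pow_two, adE, M.lie_D_D]
  simp [this]

lemma Sq_t (i j : Fin n) : M.Sq i (M.t j) = 0 := by
  have h0 : ⁅M.D i, M.t j⁆ = if j = i then M.D i else 0 := by
    rw [← lie_skew, M.lie_t_D]; split_ifs <;> simp
  have h1 : ⁅M.D i, ⁅M.D i, M.t j⁆⁆ = 0 := by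
    rw [h0]; split_ifs <;> simp
  refine LinearMap.ext fun y => ?_
  rw [M.Sq_apply (by rw [h1, lie_zero])]
  have h2 : dp (adE (M.D i)) 2 (M.t j) = 0 := by
    have : (adE (M.D i) ^ 2) (M.t j) = 0 := by rw [pow_two]; exact h1
    rw [dp, LinearMap.smul_apply, this, smul_zero]
  have h3 : ⁅M.D i, dp (adE (M.D i)) (q + 4) y⁆ = 0 := by
    have := congrArg (fun f => f y) (M.adE_D_pow_p i)
    rw [dp, LinearMap.smul_apply, lie_csmul]
    have h4 : ⁅M.D i, (adE (M.D i) ^ (q + 4)) y⁆ = (adE (M.D i) ^ (q + 5)) y := by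
      rw [pow_succ' _ (q + 4)]; rfl
    rw [h4]
    rw [this]; simp
  rw [h2, h0]
  split_ifs <;> simp [h3]

/-- The quadratic vector field `X k ^ 2 • D k`. -/
def v (k : Fin n) : L := M.X k ^ 2 • M.D k

omit hp in
lemma dp_X_pow (i : Fin n) (m k : ℕ) (hk : k < q + 5) :
    dp (adE (M.D i)) k (M.X i ^ (m + k) • M.D i) =
      ((m + k).choose k : F) • (M.X i ^ m • M.D i) := by
  induction k generalizing m with
  | zero => simp [dp_zero]
  | succ k ih =>
    have h1 := nz (F := F) (q := q) (Nat.succ_pos k) hk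
    have h2 := dp_succ (q + 5) (adE (M.D i)) hk (M.X i ^ (m + (k + 1)) • M.D i)
    have h3 : m + (k + 1) = (m + 1) + k := by ring
    have h4 : adE (M.D i) (M.X i ^ (m + 1) • M.D i) = ((m + 1 : ℕ) : F) • (M.X i ^ m • M.D i) := by
      change ⁅M.D i, _⁆ = _
      rw [lie_smul_right, M.lie_D_D]
      simp [Derivation.leibniz_pow, M.D_X_self]
      module
    rw [h3, ih _ (by omega), (adE (M.D i)).map_smul, h4, smul_smul] at h2
    refine smul_right_injective L h1 ?_
    simp only
    rw [h3, h2, smul_smul]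
    congr 1
    have := Nat.choose_succ_right_eq (m + 1 + k) k
    rw [show m + 1 + k - k = m + 1 by omega] at this
    rw [mul_comm ((k + 1 : ℕ) : F)]
    rw [← Nat.cast_mul, ← Nat.cast_mul, this]

/-- The value of `Sq (D i)` on the pair `(v j, X j ^ (p - 1) • D j)` at the origin; it detects the
class of `Sq (D i)`. -/
lemma κ_Sq (i j : Fin n) : M.κ j (M.Sq i (M.v j) (M.X j ^ (q + 4) • M.D j)) =
    if i = j then -3 else 0 := by
  by_cases h : i = j
  · subst h
    have e1 : ⁅M.D i, M.v i⁆ = (2 : F) • M.t i := by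
      rw [v, lie_smul_right, M.lie_D_D, t]
      simp [Derivation.leibniz_pow, M.D_X_self]
      match_scalars
      simp [map_ofNat]
    have e2 : ⁅M.D i, M.t i⁆ = M.D i := by
      rw [← lie_skew, M.lie_t_D]; simp
    rw [M.Sq_apply (by rw [e1, lie_csmul, lie_csmul, e2, M.lie_D_D, smul_zero])]
    have e3 : dp (adE (M.D i)) 2 (M.v i) = M.D i := by
      have := M.dp_X_pow i 0 2 (by omega)
      simpa [v] using this
    have e4 := M.dp_X_pow i 0 (q + 4) (by omega)
    have e5 := M.dp_X_pow i 1 (q + 3) (by omega)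
    rw [zero_add] at e4
    rw [show 1 + (q + 3) = q + 4 by ring] at e5
    have e6 : (((q + 4).choose (q + 3) : ℕ) : F) = -1 := by
      rw [show q + 4 = (q + 3) + 1 by ring, Nat.choose_succ_self_right]
      push_cast; rw [castq]; norm_num
    have e7 : M.X i ^ 1 • M.D i = M.t i := by rw [pow_one, t]
    rw [e1, e3, e4, e5, e6, e7]
    simp [e2, M.lie_t_D, κ_apply, M.D_X_self]
    norm_num
  · have e1 : ⁅M.D i, M.v j⁆ = 0 := by
      rw [v, lie_smul_right, M.lie_D_D]
      simp [Derivation.leibniz_pow, M.D_X_ne (Ne.symm h)]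
    rw [M.Sq_apply (by simp [e1]), e1]
    have : dp (adE (M.D i)) 2 (M.v j) = 0 := by
      have h2 : (adE (M.D i) ^ 2) (M.v j) = adE (M.D i) ⁅M.D i, M.v j⁆ := by rw [pow_two]; rfl
      rw [dp, LinearMap.smul_apply, h2, e1]; simp
    simp [this, h]

end
end TruncModel

/-! ### Normalization of cocycles -/

namespace TruncModel
open LieCoh
section
set_option linter.unusedSectionVars false
set_option linter.unusedSimpArgs false
variable {F A : Type*} [Field F] [CommRing A] [Algebra F A] {n q : ℕ}
variable (M : TruncModel F A (q + 5) n) [hp : Fact (q + 5).Prime] [CharP F (q + 5)]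

local notation "L" => Derivation F A A
local notation "Hom1" => Derivation F A A →ₗ[F] Derivation F A A
local notation "Hom2" => Derivation F A A →ₗ[F] Derivation F A A →ₗ[F] Derivation F A A

/-- The operator `D i ^ (p - 1)` on `A`, which extracts the top coefficient in `X i`. -/
def E (i : Fin n) : A →ₗ[F] A := (M.D i : A →ₗ[F] A) ^ (q + 4)

omit hp [CharP F (q + 5)] in
lemma pow_D_comm (i j : Fin n) (m : ℕ) (f : A) :
    ((M.D i : A →ₗ[F] A) ^ m) (M.D j f) = M.D j (((M.D i : A →ₗ[F] A) ^ m) f) := by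
  induction m generalizing f with
  | zero => simp
  | succ m ih =>
    rw [pow_succ', Module.End.mul_apply, Module.End.mul_apply, ih]
    exact M.D_comm i j _

omit hp [CharP F (q + 5)] in
lemma pow_D_X_mul (i j : Fin n) (m : ℕ) (f : A) :
    ((M.D i : A →ₗ[F] A) ^ m) (M.X j * M.D j f) =
      M.X j * M.D j (((M.D i : A →ₗ[F] A) ^ m) f) +
        if j = i then (m : F) • ((M.D i : A →ₗ[F] A) ^ m) f else 0 := by
  induction m with
  | zero => simp
  | succ m ih =>
    rw [pow_succ', Module.End.mul_apply, Module.End.mul_apply, ih]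
    set g := ((M.D i : A →ₗ[F] A) ^ m) f
    change M.D i _ = M.X j * M.D j (M.D i g) + if j = i then ((m + 1 : ℕ) : F) • M.D i g else 0
    rw [map_add, Derivation.leibniz, M.D_X, M.D_comm i j]
    by_cases h : j = i
    · subst h
      simp only [if_true, (M.D j).map_smul, smul_eq_mul, mul_one]
      push_cast
      module
    · simp [h]

lemma E_X_pow (i j : Fin n) :
    M.E i (M.X j ^ (q + 4)) = if i = j then algebraMap F A ((q + 4).factorial : F) else 0 := by
  classical
  have h1 : M.X j ^ (q + 4) = M.mon (Function.update 0 j (q + 4)) := by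
    rw [M.mon_single _ j fun m hm => by simp [hm]]; simp
  rw [h1, E, M.D_pow_mon]
  by_cases h : i = j
  · subst h
    rw [if_pos rfl]
    have : Function.update (Function.update (0 : Fin n → ℕ) i (q + 4)) i
      (Function.update (0 : Fin n → ℕ) i (q + 4) i - (q + 4)) = 0 := by
      ext m; by_cases hm : m = i
      · subst hm; simp
      · simp [hm]
    rw [this, M.mon_zero]
    rw [Function.update_self, Nat.descFactorial_self, Algebra.algebraMap_eq_smul_one]
  · simp [h]

/-- The cochain `u ↦ D i ^ (p - 1) (D k (u (X k))) • D i`. Its coboundary vanishes on the torus and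
on the `D j`, so it can be used to normalize a cocycle further. -/
def nrm (i k : Fin n) : Hom1 where
  toFun u := M.E i (M.D k (u (M.X k))) • M.D i
  map_add' u v := by simp [add_smul]
  map_smul' c u := by
    simp only [Derivation.smul_apply, (M.D k).map_smul, (M.E i).map_smul, RingHom.id_apply,
      smul_assoc]

omit hp [CharP F (q + 5)] in
lemma nrm_apply (i k : Fin n) (u : L) : M.nrm i k u = M.E i (M.D k (u (M.X k))) • M.D i := rfl

omit hp [CharP F (q + 5)] in
lemma E_algebraMap (i : Fin n) (c : F) : M.E i (algebraMap F A c) = 0 := by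
  rw [E, pow_succ, Module.End.mul_apply]
  have : (M.D i : A →ₗ[F] A) (algebraMap F A c) = 0 := (M.D i).map_algebraMap c
  rw [this, map_zero]

omit hp [CharP F (q + 5)] in
lemma d_nrm_D (i k j : Fin n) : d (M.nrm i k) (M.D j) = 0 := by
  refine LinearMap.ext fun u => ?_
  rw [d_apply_eq, LinearMap.add_apply, lie_hom1, nrm_apply, nrm_apply, nrm_apply]
  rw [lie_D_smul_D, M.lie_D_apply_X, M.D_X]
  have : M.D k (if k = j then 1 else 0) = 0 := by split_ifs <;> simp
  rw [this, map_zero, zero_smul, map_zero, LinearMap.zero_apply, add_zero, M.D_comm k j,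
    show M.E i (M.D j (M.D k (u (M.X k)))) = _ from M.pow_D_comm i j (q + 4) _]
  exact sub_self _

lemma d_nrm_t (i k j : Fin n) : d (M.nrm i k) (M.t j) = 0 := by
  refine LinearMap.ext fun u => ?_
  rw [d_apply_eq, LinearMap.add_apply, lie_hom1, nrm_apply, nrm_apply, nrm_apply]
  have h1 : M.E i (M.D k (M.t j (M.X k))) = 0 := by
    rw [t, Derivation.smul_apply, M.D_X]
    split_ifs with h
    · subst h
      simpa [M.D_X_self] using M.E_algebraMap i 1
    · simp
  have h2 : M.D k (⁅M.t j, u⁆ (M.X k)) = M.X j * M.D j (M.D k (u (M.X k))) := by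
    rw [M.lie_t_apply_X, map_sub, Derivation.leibniz, M.D_X, M.D_comm k j]
    by_cases h : j = k
    · subst h; simp
    · simp [h]
  have h3 := M.pow_D_X_mul i j (q + 4) (M.D k (u (M.X k)))
  rw [h1, h2, zero_smul, map_zero, LinearMap.zero_apply, add_zero, E, h3, lie_smul_right, M.lie_t_D]
  set g := ((M.D i : A →ₗ[F] A) ^ (q + 4)) (M.D k (u (M.X k)))
  rw [t, Derivation.smul_apply, smul_eq_mul]
  by_cases h : j = i
  · subst h
    have := castq (F := F) (q := q)
    simp only [if_true]
    push_cast
    rw [this]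
    match_scalars
    rw [add_smul, Algebra.smul_def, Algebra.smul_def]
    simp only [map_neg, map_ofNat]
    ring
  · simp [h]

lemma sq2_v (i : Fin n) : M.Sq2 (M.v i) := by
  apply sq2_smul <;> simp [Derivation.leibniz_pow, M.ε_X]

lemma sq2_top (i k : Fin n) : M.Sq2 (M.X i ^ (q + 3) • M.t k) := by
  rw [t, smul_smul]
  apply sq2_smul <;> simp [Derivation.leibniz, Derivation.leibniz_pow, M.ε_X]

lemma top_self (i : Fin n) : M.X i ^ (q + 3) • M.t i = M.X i ^ (q + 4) • M.D i := by
  rw [t, smul_smul, ← pow_succ]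

lemma lie_v_top (i k : Fin n) : ⁅M.v i, M.X i ^ (q + 3) • M.t k⁆ =
    if i = k then 0 else (-2 : F) • ((M.X i ^ (q + 4) * M.X k) • M.D k) := by
  by_cases h : i = k
  · subst h
    rw [M.top_self, v, lie_smul_D]
    simp [Derivation.leibniz, Derivation.leibniz_pow, M.D_X_self]
    match_scalars
    linear_combination (q + 4 - 2) * M.X_pow i
  · rw [v, t, smul_smul, lie_smul_D]
    simp [Derivation.leibniz, Derivation.leibniz_pow, M.D_X_self, M.D_X_ne h, M.D_X_ne (Ne.symm h),
      castqA F A (q := q), h]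
    match_scalars
    simp only [map_ofNat, map_neg]
    ring

/-- The coboundary of `nrm i k` detects the pair `(v i, X i ^ (p - 2) • t k)` among all such pairs,
for `k ≠ i`. -/
lemma κ_d_nrm (i k j l : Fin n) :
    M.κ j (d (M.nrm i k) (M.v j) (M.X j ^ (q + 3) • M.t l)) =
      if i = j ∧ k = l ∧ j ≠ l then 2 * ((q + 4).factorial : F) else 0 := by
  rw [d_apply, map_sub, map_sub, M.κ_lie_sq (M.sq2_v j), M.κ_lie_sq (M.sq2_top j l), M.lie_v_top]
  by_cases hjl : j = l
  · simp [hjl]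
  rw [if_neg hjl, (M.nrm i k).map_smul, nrm_apply, Derivation.smul_apply, M.D_X]
  by_cases hkl : k = l
  · subst hkl
    have : M.D k (M.X j ^ (q + 4) * M.X k) = M.X j ^ (q + 4) := by
      simp [Derivation.leibniz, Derivation.leibniz_pow, M.D_X_self, M.D_X_ne hjl]
    rw [if_pos rfl, smul_eq_mul, mul_one, this, M.E_X_pow]
    by_cases hij : i = j
    · subst hij
      simp [hjl, κ_apply, M.D_X_self]
    · simp [hij]
  · simp [hkl, Ne.symm hkl]

lemma fact_ne : ((q + 4).factorial : F) ≠ 0 := by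
  rw [Ne, CharP.cast_eq_zero_iff F (q + 5), hp.out.dvd_factorial]
  omega

/-- Every cocycle is, modulo the `Sq i` and coboundaries, normalized: it vanishes on the
torus and on all `D j`, and its values on `v i` and `X i ^ (p - 2) • t k` have no `D i` term. -/
lemma stage2 {ψ : Hom2} (hψ : IsCoc ψ) :
    ∃ (c : Fin n → F) (φ : Hom1) (ψ' : Hom2), ψ - ∑ i, c i • M.Sq i = ψ' + d φ ∧ IsCoc ψ' ∧
      (∀ j, ψ' (M.t j) = 0) ∧ (∀ j, ψ' (M.D j) = 0) ∧
      ∀ i k, M.κ i (ψ' (M.v i) (M.X i ^ (q + 3) • M.t k)) = 0 := by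
  classical
  obtain ⟨φ, h1, h2⟩ := M.stage1 hψ
  set ψ₁ := ψ - d φ with hψ₁
  have hc₁ : IsCoc ψ₁ := hψ.sub (isCoc_d φ)
  -- by `κ_Sq`, each `Sq (D i)` contributes `-3` to this value
  let c : Fin n → F := fun i => - (M.κ i (ψ₁ (M.v i) (M.X i ^ (q + 4) • M.D i)) / 3)
  set S : Hom2 := ∑ i, c i • M.Sq i with hS
  have hSc : IsCoc S := IsCoc.sum _ _ fun i _ => (M.isCoc_Sq i).smul _
  have Sap : ∀ x y, S x y = ∑ i, c i • M.Sq i x y := by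
    intro x y; simp [hS, LinearMap.sum_apply]
  -- the constant comes from `κ_d_nrm`
  let b : Fin n → Fin n → F := fun i k =>
    M.κ i ((ψ₁ - S) (M.v i) (M.X i ^ (q + 3) • M.t k)) / (2 * ((q + 4).factorial : F))
  set N : Hom1 := ∑ i, ∑ k, b i k • M.nrm i k with hN
  have Nap : ∀ x y, d N x y = ∑ i, ∑ k, b i k • d (M.nrm i k) x y := by
    intro x y; simp [hN, map_sum, LinearMap.sum_apply]
  refine ⟨c, φ + N, ψ₁ - S - d N, ?_, (hc₁.sub hSc).sub (isCoc_d N), ?_, ?_, ?_⟩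
  · rw [hψ₁, map_add]
    refine LinearMap.ext fun x => LinearMap.ext fun y => ?_
    simp only [LinearMap.sub_apply, LinearMap.add_apply]
    abel
  · intro j
    refine LinearMap.ext fun y => ?_
    simp only [LinearMap.sub_apply, h1, Sap, Nap, M.Sq_t, M.d_nrm_t, LinearMap.zero_apply,
      smul_zero, Finset.sum_const_zero, sub_zero]
  · intro j
    refine LinearMap.ext fun y => ?_
    simp only [LinearMap.sub_apply, h2, Sap, Nap, M.Sq_D, M.d_nrm_D, LinearMap.zero_apply,
      smul_zero, Finset.sum_const_zero, sub_zero]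
  · intro j l
    have e1 : M.κ j (d N (M.v j) (M.X j ^ (q + 3) • M.t l)) =
        if j ≠ l then b j l * (2 * ((q + 4).factorial : F)) else 0 := by
      rw [Nap, map_sum, Finset.sum_eq_single j, map_sum, Finset.sum_eq_single l]
      · rw [(M.κ j).map_smul, M.κ_d_nrm]; by_cases h : j = l <;> simp [h]
      · intro k _ hk
        rw [(M.κ j).map_smul, M.κ_d_nrm]; simp [hk]
      · simp
      · intro i _ hi
        rw [map_sum]
        refine Finset.sum_eq_zero fun k _ => ?_
        rw [(M.κ j).map_smul, M.κ_d_nrm]; simp [hi]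
      · simp
    rw [LinearMap.sub_apply, LinearMap.sub_apply, map_sub, e1]
    have h2 : (2 : F) ≠ 0 := by
      exact_mod_cast nz (F := F) (q := q) (m := 2) (by omega) (by omega)
    have h3 : (3 : F) ≠ 0 := by
      exact_mod_cast nz (F := F) (q := q) (m := 3) (by omega) (by omega)
    by_cases h : j = l
    · subst h
      rw [if_neg (by simp), sub_zero, LinearMap.sub_apply, LinearMap.sub_apply, map_sub, Sap,
        M.top_self, map_sum, Finset.sum_eq_single j]
      · rw [(M.κ j).map_smul, M.κ_Sq, if_pos rfl]
        simp only [c, smul_eq_mul]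
        field_simp
        ring
      · intro i _ hi
        rw [(M.κ j).map_smul, M.κ_Sq, if_neg hi, smul_zero]
      · simp
    · rw [if_pos h]
      simp only [b]
      rw [div_mul_cancel₀, sub_self]
      exact mul_ne_zero h2 fact_ne

/-- The classes of the `Sq (D i)` are linearly independent: both `v j` and `X j ^ (p - 1) • D j`
vanish to second order and they commute, so every coboundary takes a value on them that vanishes at
the origin, in contrast to `κ_Sq`. -/
lemma Sq_unique {c : Fin n → F} {φ : Hom1} (h : ∑ i, c i • M.Sq i = d φ) (j : Fin n) :
    c j = 0 := by
  classical
  have h3 : (3 : F) ≠ 0 := by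
    exact_mod_cast nz (F := F) (q := q) (m := 3) (by omega) (by omega)
  have h4 : M.κ j ((∑ i, c i • M.Sq i) (M.v j) (M.X j ^ (q + 4) • M.D j)) =
      M.κ j (d φ (M.v j) (M.X j ^ (q + 4) • M.D j)) := by rw [h]
  have h6 : M.κ j (d φ (M.v j) (M.X j ^ (q + 4) • M.D j)) = 0 := by
    rw [← M.top_self, d_apply, map_sub, map_sub, M.κ_lie_sq (M.sq2_v j),
      M.κ_lie_sq (M.sq2_top j j), M.lie_v_top, if_pos rfl, map_zero, map_zero, sub_zero, sub_zero]
  have : (∑ i, c i • M.Sq i) (M.v j) (M.X j ^ (q + 4) • M.D j) =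
    ∑ i, c i • M.Sq i (M.v j) (M.X j ^ (q + 4) • M.D j) := by simp [LinearMap.sum_apply]
  have h5 : M.κ j (∑ i, c i • M.Sq i (M.v j) (M.X j ^ (q + 4) • M.D j)) = c j * -3 := by
    rw [map_sum, Finset.sum_eq_single j]
    · rw [(M.κ j).map_smul, M.κ_Sq, if_pos rfl, smul_eq_mul]
    · intro i _ hi
      rw [(M.κ j).map_smul, M.κ_Sq, if_neg hi, smul_zero]
    · simp
  rw [this, h5, h6] at h4
  simpa [h3] using h4

end
end TruncModel

/-! ### Reduction to values at the origin -/

namespace TruncModel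
open LieCoh
section
set_option linter.unusedSectionVars false
set_option linter.unusedSimpArgs false
variable {F A : Type*} [Field F] [CommRing A] [Algebra F A] {n q : ℕ}
variable (M : TruncModel F A (q + 5) n) [hp : Fact (q + 5).Prime] [CharP F (q + 5)]

local notation "L" => Derivation F A A
local notation "Hom1" => Derivation F A A →ₗ[F] Derivation F A A
local notation "Hom2" => Derivation F A A →ₗ[F] Derivation F A A →ₗ[F] Derivation F A A

/-- A normalized cocycle: it vanishes on the `t j` and the `D j`, and the `D i`-component at the
origin of `ψ (v i) (X i ^ (p - 2) • t k)` is zero. -/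
structure Normalized (ψ : Hom2) : Prop where
  coc : IsCoc ψ
  t_eq : ∀ j, ψ (M.t j) = 0
  D_eq : ∀ j, ψ (M.D j) = 0
  top : ∀ i k, M.κ i (ψ (M.v i) (M.X i ^ (q + 3) • M.t k)) = 0

variable {M}
variable {ψ : Derivation F A A →ₗ[F] Derivation F A A →ₗ[F] Derivation F A A}

lemma Normalized.skew (h : M.Normalized ψ) (l : Fin n) (x y : L) :
    M.κ l (ψ x y) = - M.κ l (ψ y x) := by
  rw [h.coc.skew, map_neg]

/-- The cocycle identity at the origin for three fields vanishing there to second order. -/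
lemma Normalized.coc3 (h : M.Normalized ψ) {x y z : L} (hx : M.Sq2 x) (hy : M.Sq2 y)
    (hz : M.Sq2 z) (l : Fin n) :
    M.κ l (ψ ⁅x, y⁆ z) = M.κ l (ψ ⁅x, z⁆ y) - M.κ l (ψ ⁅y, z⁆ x) := by
  have h1 := congrArg (M.κ l) (h.coc.coc x y z)
  simp only [map_sub, map_add, M.κ_lie_sq hx, M.κ_lie_sq hy, M.κ_lie_sq hz, map_zero] at h1
  linear_combination -h1

/-- Invariance of `ψ` at the origin under a second order field in the kernel. -/
lemma Normalized.inv (h : M.Normalized ψ) {x : L} (hx : M.Sq2 x) (hx0 : ψ x = 0) (y z : L)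
    (l : Fin n) : M.κ l (ψ ⁅x, y⁆ z) + M.κ l (ψ y ⁅x, z⁆) = 0 := by
  have h1 := congrArg (M.κ l) (h.coc.coc x y z)
  simp only [map_sub, map_add, M.κ_lie_sq hx, hx0, LinearMap.zero_apply, lie_zero, map_zero] at h1
  rw [h.skew l y, h.coc.skew ⁅y, z⁆ x, hx0] at *
  simp only [LinearMap.zero_apply, neg_zero, map_zero] at h1
  linear_combination -h1

/-- The cocycle identity at the origin for one linear field and two of second order. -/
lemma Normalized.gl (h : M.Normalized ψ) (a b : Fin n) {y z : L} (hy : M.Sq2 y) (hz : M.Sq2 z)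
    (l : Fin n) : (if b = l then - M.κ a (ψ y z) else 0) =
      M.κ l (ψ ⁅M.X a • M.D b, y⁆ z) - M.κ l (ψ ⁅M.X a • M.D b, z⁆ y)
        + M.κ l (ψ ⁅y, z⁆ (M.X a • M.D b)) := by
  have h1 := congrArg (M.κ l) (h.coc.coc (M.X a • M.D b) y z)
  simp only [map_sub, map_add, M.κ_lie_sq hy, M.κ_lie_sq hz, M.κ_lie_gl, map_zero] at h1
  linear_combination h1

/-- A weight vector `x` whose brackets with all `D j` lie in the kernel of `ψ` is itself in the
kernel once the finitely many weight-compatible values of `ψ x` at the origin vanish. -/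
lemma Normalized.crit (h : M.Normalized ψ) {x : L} (ω : Fin n → F)
    (hD : ∀ j, ψ ⁅M.D j, x⁆ = 0) (ht : ∀ j, ⁅M.t j, x⁆ = ω j • x)
    (hw : ∀ (a : Fin n → ℕ) (k l : Fin n), (∀ j, a j < q + 5) →
      (∀ j, (a j : F) = (if j = k then 1 else 0) - (if j = l then 1 else 0) - ω j) →
      M.κ l (ψ x (M.mon a • M.D k)) = 0) : ψ x = 0 := by
  classical
  have hDx : ∀ j y, ⁅M.D j, ψ x y⁆ = ψ x ⁅M.D j, y⁆ := by
    intro j y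
    have h1 := h.coc.coc (M.D j) x y
    rw [h.D_eq, hD, h.coc.skew ⁅M.D j, y⁆ x, h.coc.skew ⁅x, y⁆, h.D_eq] at h1
    simpa [add_neg_eq_zero] using h1
  have htx : ∀ j y, ⁅M.t j, ψ x y⁆ = ω j • ψ x y + ψ x ⁅M.t j, y⁆ := by
    intro j y
    have h1 := h.coc.coc (M.t j) x y
    rw [h.t_eq, ht, h.coc.skew ⁅M.t j, y⁆ x, h.coc.skew ⁅x, y⁆, h.t_eq, ψ.map_smul] at h1
    simp only [LinearMap.zero_apply, lie_zero, LinearMap.smul_apply, sub_zero, add_zero,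
      neg_zero] at h1
    rw [← sub_eq_zero, ← h1]
    abel
  apply M.L_ext
  suffices H : ∀ N : ℕ, ∀ a : Fin n → ℕ, (∀ i, a i < q + 5) → ∑ i, a i = N →
      ∀ k, ψ x (M.e a k) = 0 by
    intro a ha k; rw [H _ a ha rfl k]; rfl
  intro N
  induction N with
  | zero =>
    intro a _ h0 k
    have : a = 0 := by
      funext i
      exact (Finset.sum_eq_zero_iff.1 h0) i (Finset.mem_univ i)
    rw [this, e_zero, h.coc.skew, h.D_eq]; simp
  | succ N ih =>
    intro a ha hN k
    apply M.eq_zero_of_lie_D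
    · intro i
      rw [hDx, M.lie_D_e, (ψ x).map_smul]
      rcases Nat.eq_zero_or_pos (a i) with h0 | h0
      · simp [h0]
      · rw [ih, smul_zero]
        · intro m
          by_cases hm : m = i
          · subst hm; simp; have := ha m; omega
          · simp [hm, ha]
        · rw [Finset.sum_update_of_mem (Finset.mem_univ i)]
          rw [← Finset.add_sum_erase _ _ (Finset.mem_univ i)] at hN
          rw [Finset.sdiff_singleton_eq_erase]
          omega
    · intro l
      by_contra hne
      refine hne (hw a k l ha fun j => ?_)
      have h1 := congrArg (M.κ l) (htx j (M.e a k))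
      rw [M.lie_t_e, (ψ x).map_smul, map_add, map_smul, map_smul, κ_lie_t, smul_eq_mul,
        smul_eq_mul, wt] at h1
      have h2 : (((a j : F) - (if j = k then 1 else 0)) + ω j + if j = l then 1 else 0) *
          M.κ l (ψ x (M.e a k)) = 0 := by
        rw [add_mul, add_mul]
        split_ifs at h1 ⊢ <;> linear_combination -h1
      have := (mul_eq_zero.1 h2).resolve_right hne
      linear_combination this

lemma cast_zero {m : ℕ} (hm : m < q + 5) (h : (m : F) = 0) : m = 0 :=
  cast_inj (F := F) hm (by omega) (by simpa using h)

lemma cast_one {m : ℕ} (hm : m < q + 5) (h : (m : F) = 1) : m = 1 :=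
  cast_inj (F := F) hm (by omega) (by simpa using h)

lemma cast_neg_one {m : ℕ} (hm : m < q + 5) (h : (m : F) = -1) : m = q + 4 :=
  cast_inj (F := F) hm (by omega) (by rw [h]; push_cast; rw [castq]; ring)

lemma cast_neg_two {m : ℕ} (hm : m < q + 5) (h : (m : F) = -2) : m = q + 3 :=
  cast_inj (F := F) hm (by omega) (by rw [h]; push_cast; rw [castq]; ring)

variable (M) in
include M hp in
lemma two_ne : (2 : F) ≠ 0 := by
  exact_mod_cast nz (F := F) (q := q) (m := 2) (by omega) (by omega)

variable (M) in
include M hp in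
lemma three_ne : (3 : F) ≠ 0 := by
  exact_mod_cast nz (F := F) (q := q) (m := 3) (by omega) (by omega)

end
end TruncModel

/-! ### Quadratic vector fields -/

namespace TruncModel
open LieCoh
section
set_option linter.unusedSectionVars false
set_option linter.unusedSimpArgs false
variable {F A : Type*} [Field F] [CommRing A] [Algebra F A] {n q : ℕ}
variable (M : TruncModel F A (q + 5) n) [hp : Fact (q + 5).Prime] [CharP F (q + 5)]

local notation "L" => Derivation F A A
local notation "Hom1" => Derivation F A A →ₗ[F] Derivation F A A
local notation "Hom2" => Derivation F A A →ₗ[F] Derivation F A A →ₗ[F] Derivation F A A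

variable {M}
variable {ψ : Derivation F A A →ₗ[F] Derivation F A A →ₗ[F] Derivation F A A}

/-- The `D l`-component of `ψ (v i, ·)` at the origin for `l ≠ i`, on fields pointing in a third
direction. -/
lemma stepA_1 (h : M.Normalized ψ) {i k l : Fin n} (hil : i ≠ l) (hki : k ≠ i) (hkl : k ≠ l) :
    M.κ l (ψ (M.v i) ((M.X i ^ (q + 4) * M.X l ^ (q + 4) * M.X k) • M.D k)) = 0 := by
  have s : M.Sq2 ((M.X i ^ (q + 4) * M.X l ^ (q + 3) * M.X k) • M.D k) := by
    apply sq2_smul <;> simp [Derivation.leibniz, Derivation.leibniz_pow, M.ε_X]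
  have b1 : ⁅M.v i, M.v l⁆ = 0 := by
    rw [v, v, lie_smul_D]
    simp [Derivation.leibniz_pow, M.D_X_ne hil, M.D_X_ne hil.symm]
  have b2 : ⁅M.v i, (M.X i ^ (q + 4) * M.X l ^ (q + 3) * M.X k) • M.D k⁆ = 0 := by
    rw [v, lie_smul_D]
    simp [Derivation.leibniz, Derivation.leibniz_pow, M.D_X_self, M.D_X_ne hil, M.D_X_ne hil.symm,
      M.D_X_ne hki, M.D_X_ne hki.symm]
    match_scalars
    linear_combination ((q + 4) * M.X l ^ (q + 3) * M.X k) * M.X_pow i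
  have b3 : ⁅M.v l, (M.X i ^ (q + 4) * M.X l ^ (q + 3) * M.X k) • M.D k⁆ =
      (-2 : F) • ((M.X i ^ (q + 4) * M.X l ^ (q + 4) * M.X k) • M.D k) := by
    rw [v, lie_smul_D]
    simp [Derivation.leibniz, Derivation.leibniz_pow, M.D_X_self, M.D_X_ne hil, M.D_X_ne hil.symm,
      M.D_X_ne hkl, M.D_X_ne hkl.symm, castqA F A (q := q)]
    match_scalars
    simp only [map_ofNat]
    ring
  have c := h.coc3 (M.sq2_v i) (M.sq2_v l) s l
  rw [b1, b2, b3, h.skew l _ (M.v i)] at c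
  simpa [M.two_ne] using c

/-- The `D l`-component of `ψ (v i, ·)` at the origin for `l ≠ i`, on fields in direction `i`. -/
lemma stepA_2 (h : M.Normalized ψ) {i l : Fin n} (hil : i ≠ l) :
    M.κ l (ψ (M.v i) (M.X l ^ (q + 4) • M.D i)) = 0 := by
  have s : M.Sq2 (M.X l ^ (q + 3) • M.D i) := by
    apply sq2_smul <;> simp [Derivation.leibniz, Derivation.leibniz_pow, M.ε_X]
  have b1 : ⁅M.v i, M.v l⁆ = 0 := by
    rw [v, v, lie_smul_D]
    simp [Derivation.leibniz_pow, M.D_X_ne hil, M.D_X_ne hil.symm]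
  have b2 : ⁅M.v i, M.X l ^ (q + 3) • M.D i⁆ = (-2 : F) • (M.X l ^ (q + 3) • M.t i) := by
    rw [v, lie_smul_D, t]
    simp [Derivation.leibniz_pow, M.D_X_self, M.D_X_ne hil, M.D_X_ne hil.symm]
    match_scalars
    simp only [map_ofNat]
    ring
  have b3 : ⁅M.v l, M.X l ^ (q + 3) • M.D i⁆ = (-2 : F) • (M.X l ^ (q + 4) • M.D i) := by
    rw [v, lie_smul_D]
    simp [Derivation.leibniz_pow, M.D_X_self, M.D_X_ne hil, M.D_X_ne hil.symm,
      castqA F A (q := q)]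
    match_scalars
    simp only [map_ofNat]
    ring
  have c := h.coc3 (M.sq2_v i) (M.sq2_v l) s l
  rw [b1, b2, b3, h.skew l _ (M.v i), h.skew l _ (M.v l)] at c
  simpa [M.two_ne, h.top] using c

/-- The `D l`-component of `ψ (v i, ·)` at the origin for `l ≠ i`, on fields in direction `l`.
Unlike the other two cases this one needs the linear field `X l • D i`, and goes through the values at
`X i * X l • D i` and `X i ^ 2 * X l • D i`. -/
lemma stepA_3 (h : M.Normalized ψ) {i l : Fin n} (hil : i ≠ l) :
    M.κ l (ψ (M.v i) (M.X i ^ (q + 4) • M.D l)) = 0 := by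
  have D1 := M.D_X_ne hil
  have D2 := M.D_X_ne hil.symm
  set y₁ : L := (M.X i ^ 2 * M.X l) • M.D i with hy₁
  set y₂ : L := (M.X i * M.X l) • M.D i with hy₂
  have s1 : M.Sq2 y₁ := by
    apply sq2_smul <;> simp [Derivation.leibniz, Derivation.leibniz_pow, M.ε_X]
  have s2 : M.Sq2 y₂ := by
    apply sq2_smul <;> simp [Derivation.leibniz, Derivation.leibniz_pow, M.ε_X]
  have s3 : ∀ m, M.Sq2 (M.X i ^ (m + 2) • M.D l) := by
    intro m
    apply sq2_smul <;> simp [Derivation.leibniz, Derivation.leibniz_pow, M.ε_X]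
  have top := h.top i l
  have top' := h.top i i
  have e1 : M.κ i (ψ (M.X i ^ (q + 3) • M.D l) y₁) = 0 := by
    have b1 : ⁅M.v i, y₁⁆ = 0 := by
      rw [v, lie_smul_D]
      simp [Derivation.leibniz, Derivation.leibniz_pow, M.D_X_self, D1, D2]
      match_scalars
      ring
    have b2 : ⁅M.v i, M.X i ^ (q + 2) • M.D l⁆ = (-3 : F) • (M.X i ^ (q + 3) • M.D l) := by
      rw [v, lie_smul_D]
      simp [Derivation.leibniz_pow, M.D_X_self, D1, D2, castqA F A (q := q)]
      match_scalars
      simp only [map_ofNat]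
      ring
    have b3 : ⁅y₁, M.X i ^ (q + 2) • M.D l⁆ =
        (-3 : F) • (M.X i ^ (q + 3) • M.t l) - M.X i ^ (q + 3) • M.t i := by
      rw [hy₁, lie_smul_D, t, t]
      simp [Derivation.leibniz, Derivation.leibniz_pow, M.D_X_self, D1, D2, castqA F A (q := q)]
      match_scalars <;> try simp only [map_ofNat]
      all_goals ring
    have c := h.coc3 (M.sq2_v i) s1 (s3 q) i
    rw [b1, b2, b3, h.skew i _ (M.v i)] at c
    simpa [M.three_ne, h.top] using c
  have e2 : M.κ i (ψ (M.X i ^ (q + 4) • M.D l) y₂) = 0 := by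
    have b1 : ⁅M.v i, y₂⁆ = - y₁ := by
      rw [v, lie_smul_D]
      simp [Derivation.leibniz, Derivation.leibniz_pow, M.D_X_self, D1, D2]
      match_scalars
      ring
    have b2 : ⁅M.v i, M.X i ^ (q + 3) • M.D l⁆ = (-2 : F) • (M.X i ^ (q + 4) • M.D l) := by
      rw [v, lie_smul_D]
      simp [Derivation.leibniz_pow, M.D_X_self, D1, D2, castqA F A (q := q)]
      match_scalars
      simp only [map_ofNat]
      ring
    have b3 : ⁅y₂, M.X i ^ (q + 3) • M.D l⁆ =
        (-2 : F) • (M.X i ^ (q + 3) • M.t l) - M.X i ^ (q + 3) • M.t i := by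
      rw [hy₂, lie_smul_D, t, t]
      simp [Derivation.leibniz, Derivation.leibniz_pow, M.D_X_self, D1, D2, castqA F A (q := q)]
      match_scalars <;> try simp only [map_ofNat]
      all_goals ring
    have c := h.coc3 (M.sq2_v i) s2 (s3 (q + 1)) i
    rw [b1, b2, b3, h.skew i _ (M.v i), map_neg, LinearMap.neg_apply, map_neg,
      h.skew i y₁, e1] at c
    simpa [M.two_ne, h.top] using c
  have b1 : ⁅M.X l • M.D i, M.v i⁆ = (2 : F) • y₂ := by
    rw [v, lie_smul_D]
    simp [Derivation.leibniz_pow, M.D_X_self, D1, D2]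
    match_scalars
    simp only [map_ofNat]
    ring
  have b2 : ⁅M.X l • M.D i, M.X i ^ (q + 4) • M.D l⁆ =
      - (M.X i ^ (q + 3) • M.t l) - M.X i ^ (q + 3) • M.t i := by
    rw [lie_smul_D, t, t]
    simp [Derivation.leibniz, Derivation.leibniz_pow, M.D_X_self, D1, D2, castqA F A (q := q)]
    match_scalars <;> ring
  have b3 : ⁅M.v i, M.X i ^ (q + 4) • M.D l⁆ = 0 := by
    rw [v, lie_smul_D]
    simp [Derivation.leibniz_pow, M.D_X_self, D1, D2]
    match_scalars
    linear_combination (q + 4) * M.X_pow i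
  have s4 : M.Sq2 (M.X i ^ (q + 4) • M.D l) := s3 (q + 2)
  have c := h.gl l i (M.sq2_v i) s4 i
  rw [b1, b2, b3, h.skew i _ (M.v i), if_pos rfl] at c
  rw [ψ.map_smul, LinearMap.smul_apply, (M.κ i).map_smul, h.skew i y₂, e2] at c
  simpa [h.top] using c

/-- A normalized cocycle kills the quadratic fields `v i`: of the values required by
`Normalized.crit`, those with target direction `i` vanish by normalization. -/
lemma Normalized.v_eq (h : M.Normalized ψ) (i : Fin n) : ψ (M.v i) = 0 := by
  refine h.crit (fun j => if j = i then 1 else 0) ?_ ?_ ?_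
  · intro j
    rw [v, lie_D_smul_D]
    by_cases hj : j = i
    · subst hj
      have : M.D j (M.X j ^ 2) • M.D j = (2 : F) • M.t j := by
        rw [t]
        simp [Derivation.leibniz_pow, M.D_X_self]
        match_scalars
        simp [map_ofNat]
      rw [this, ψ.map_smul, h.t_eq, smul_zero]
    · simp [Derivation.leibniz_pow, M.D_X_ne (Ne.symm hj)]
  · intro j
    rw [v, lie_smul_right, M.lie_t_D, t, Derivation.smul_apply, Derivation.leibniz_pow]
    by_cases hj : j = i
    · subst hj
      simp [M.D_X_self]
      match_scalars
      ring
    · simp [M.D_X_ne (Ne.symm hj), hj]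
  · intro a k l ha hw
    by_cases hil : i = l
    · subst hil
      by_cases hki : k = i
      · subst hki
        have e1 : a k = q + 4 := cast_neg_one (F := F) (ha k) (by rw [hw]; simp)
        rw [M.mon_single a k fun m hm => cast_zero (F := F) (ha m) (by rw [hw]; simp [hm]), e1,
          ← M.top_self]
        exact h.top k k
      · have e1 : a i = q + 3 := cast_neg_two (F := F) (ha i) (by
          rw [hw]; simp [Ne.symm hki]; norm_num)
        have e2 : a k = 1 := cast_one (F := F) (ha k) (by rw [hw]; simp [hki])
        rw [M.mon_two a (Ne.symm hki) fun m h1 h2 => cast_zero (F := F) (ha m) (by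
          rw [hw]; simp [h1, h2]), e1, e2, pow_one, mul_smul]
        exact h.top i k
    · by_cases hki : k = i
      · subst hki
        have e1 : a l = q + 4 := cast_neg_one (F := F) (ha l) (by
          rw [hw]; simp [Ne.symm hil])
        rw [M.mon_single a l fun m hm => cast_zero (F := F) (ha m) (by
          rw [hw]; by_cases hm' : m = k <;> simp [hm, hm', hil]), e1]
        exact stepA_2 h hil
      · by_cases hkl : k = l
        · subst hkl
          have e1 : a i = q + 4 := cast_neg_one (F := F) (ha i) (by
            rw [hw]; simp [Ne.symm hki])
          rw [M.mon_single a i fun m hm => cast_zero (F := F) (ha m) (by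
            rw [hw]; by_cases hm' : m = k <;> simp [hm, hm', hki]), e1]
          exact stepA_3 h hil
        · have e1 : a i = q + 4 := cast_neg_one (F := F) (ha i) (by
            rw [hw]; simp [Ne.symm hki, hil])
          have e2 : a l = q + 4 := cast_neg_one (F := F) (ha l) (by
            rw [hw]; simp [Ne.symm hkl, Ne.symm hil])
          have e3 : a k = 1 := cast_one (F := F) (ha k) (by rw [hw]; simp [hki, hkl])
          rw [M.mon_three a hil (Ne.symm hki) (Ne.symm hkl) fun m h1 h2 h3 =>
            cast_zero (F := F) (ha m) (by rw [hw]; simp [h1, h2, h3]), e1, e2, e3, pow_one]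
          exact stepA_1 h hil hki hkl

end
end TruncModel

/-! ### Linear vector fields -/

namespace TruncModel
open LieCoh
section
set_option linter.unusedSectionVars false
set_option linter.unusedSimpArgs false
variable {F A : Type*} [Field F] [CommRing A] [Algebra F A] {n q : ℕ}
variable (M : TruncModel F A (q + 5) n) [hp : Fact (q + 5).Prime] [CharP F (q + 5)]

local notation "L" => Derivation F A A
local notation "Hom1" => Derivation F A A →ₗ[F] Derivation F A A
local notation "Hom2" => Derivation F A A →ₗ[F] Derivation F A A →ₗ[F] Derivation F A A

/-- The vector field `X i ^ a • D j`. -/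
def P (i j : Fin n) (a : ℕ) : L := M.X i ^ a • M.D j

/-- The vector field `X i ^ a • t k`. -/
def T (i k : Fin n) (a : ℕ) : L := (M.X i ^ a * M.X k) • M.D k

/-- The vector field `(X i ^ a * X j) • t k`. -/
def Y (i j k : Fin n) (a : ℕ) : L := (M.X i ^ a * M.X j * M.X k) • M.D k

variable {M}

lemma P_one (i j : Fin n) : M.P i j 1 = M.X i • M.D j := by rw [P, pow_one]

lemma sq2_P (i j : Fin n) (a : ℕ) : M.Sq2 (M.P i j (a + 2)) := by
  apply sq2_smul <;> simp [Derivation.leibniz, Derivation.leibniz_pow, M.ε_X]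

lemma sq2_T (i k : Fin n) (a : ℕ) : M.Sq2 (M.T i k (a + 1)) := by
  apply sq2_smul <;> simp [Derivation.leibniz, Derivation.leibniz_pow, M.ε_X]

lemma sq2_Y (i j k : Fin n) (a : ℕ) : M.Sq2 (M.Y i j k a) := by
  apply sq2_smul <;> simp [Derivation.leibniz, Derivation.leibniz_pow, M.ε_X]

lemma lie_v_P {i j : Fin n} (hij : i ≠ j) (b : ℕ) :
    ⁅M.v i, M.P i j b⁆ = (b : F) • M.P i j (b + 1) := by
  rw [v, P, P, lie_smul_D]
  cases b <;> simp [Derivation.leibniz, Derivation.leibniz_pow, M.D_X_self, M.D_X_ne hij,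
    M.D_X_ne hij.symm]
  match_scalars
  simp
  ring

lemma lie_v_P' {i j : Fin n} (hij : i ≠ j) (b : ℕ) :
    ⁅M.v j, M.P i j b⁆ = (-2 : F) • M.T i j b := by
  rw [v, P, T, lie_smul_D]
  simp [Derivation.leibniz, Derivation.leibniz_pow, M.D_X_self, M.D_X_ne hij,
    M.D_X_ne hij.symm]
  match_scalars
  simp only [map_ofNat]
  ring

lemma lie_v_P'' {i j k : Fin n} (hki : k ≠ i) (hkj : k ≠ j) (b : ℕ) :
    ⁅M.v k, M.P i j b⁆ = 0 := by
  rw [v, P, lie_smul_D]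
  simp [Derivation.leibniz, Derivation.leibniz_pow, M.D_X_ne hki.symm, M.D_X_ne hkj]

lemma lie_v_T {i j : Fin n} (hij : i ≠ j) (a : ℕ) :
    ⁅M.v i, M.T i j a⁆ = (a : F) • M.T i j (a + 1) := by
  rw [v, T, T, lie_smul_D]
  cases a <;> simp [Derivation.leibniz, Derivation.leibniz_pow, M.D_X_self, M.D_X_ne hij,
    M.D_X_ne hij.symm]
  match_scalars
  simp
  ring

lemma lie_v_T' {i j : Fin n} (hij : i ≠ j) (a : ℕ) :
    ⁅M.v j, M.T i j a⁆ = - M.Y i j j a := by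
  rw [v, T, Y, lie_smul_D]
  simp [Derivation.leibniz, Derivation.leibniz_pow, M.D_X_self, M.D_X_ne hij,
    M.D_X_ne hij.symm]
  match_scalars
  ring

lemma lie_v_T'' {i j : Fin n} (hij : i ≠ j) (a : ℕ) :
    ⁅M.v j, M.T i i a⁆ = 0 := by
  rw [v, T, lie_smul_D]
  simp [Derivation.leibniz, Derivation.leibniz_pow, M.D_X_ne hij, M.D_X_ne hij.symm]

lemma lie_v_Y {i j : Fin n} (hij : i ≠ j) (a : ℕ) :
    ⁅M.v i, M.Y i j j a⁆ = (a : F) • M.Y i j j (a + 1) := by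
  rw [v, Y, Y, lie_smul_D]
  cases a <;> simp [Derivation.leibniz, Derivation.leibniz_pow, M.D_X_self, M.D_X_ne hij,
    M.D_X_ne hij.symm]
  match_scalars
  simp
  ring

lemma lie_v_Y' {i j : Fin n} (hij : i ≠ j) (a : ℕ) :
    ⁅M.v i, M.Y i j i a⁆ = (a - 1 : F) • M.Y i j i (a + 1) := by
  rw [v, Y, Y, lie_smul_D]
  cases a <;> simp [Derivation.leibniz, Derivation.leibniz_pow, M.D_X_self, M.D_X_ne hij,
    M.D_X_ne hij.symm]
  · match_scalars; ring
  · match_scalars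
    simp
    ring

lemma lie_gl_T {i j : Fin n} (hij : i ≠ j) (a : ℕ) :
    ⁅M.X i • M.D j, M.T i j a⁆ = M.P i j (a + 1) := by
  rw [T, P, lie_smul_D]
  simp [Derivation.leibniz, Derivation.leibniz_pow, M.D_X_self, M.D_X_ne hij, M.D_X_ne hij.symm]
  match_scalars
  ring

variable {ψ : Derivation F A A →ₗ[F] Derivation F A A →ₗ[F] Derivation F A A}

/-- At the origin, `ψ` is invariant under all `v k`. -/
lemma Normalized.v_inv (h : M.Normalized ψ) (k : Fin n) (y z : L) (l : Fin n) :
    M.κ l (ψ ⁅M.v k, y⁆ z) + M.κ l (ψ y ⁅M.v k, z⁆) = 0 :=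
  h.inv (M.sq2_v k) (h.v_eq k) y z l

lemma stepB_other (h : M.Normalized ψ) {i j k : Fin n} (hki : k ≠ i) (hkj : k ≠ j)
    (a b : ℕ) (l : Fin n) : M.κ l (ψ (M.Y i j k a) (M.P i j b)) = 0 := by
  have e1 : ⁅M.v k, (M.X i ^ a * M.X j) • M.D k⁆ = (-2 : F) • M.Y i j k a := by
    rw [v, Y, lie_smul_D]
    simp [Derivation.leibniz, Derivation.leibniz_pow, M.D_X_self, M.D_X_ne hki.symm,
      M.D_X_ne hkj.symm]
    match_scalars
    simp only [map_ofNat]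
    ring
  have c := h.v_inv k ((M.X i ^ a * M.X j) • M.D k) (M.P i j b) l
  rw [e1, lie_v_P'' hki hkj] at c
  simpa [M.two_ne] using c

lemma stepB_other' (h : M.Normalized ψ) {i j k : Fin n} (hki : k ≠ i) (hkj : k ≠ j)
    (a b : ℕ) (l : Fin n) : M.κ l (ψ (M.T i k a) (M.P i j b)) = 0 := by
  have e1 : ⁅M.v k, M.X i ^ a • M.D k⁆ = (-2 : F) • M.T i k a := lie_v_P' hki.symm a
  have c := h.v_inv k (M.X i ^ a • M.D k) (M.P i j b) l
  rw [e1, lie_v_P'' hki hkj] at c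
  simpa [M.two_ne] using c

lemma stepB_FD (h : M.Normalized ψ) {i j : Fin n} (hij : i ≠ j) (a b : ℕ) (l : Fin n) :
    M.κ l (ψ (M.Y i j j a) (M.P i j b)) = -2 * M.κ l (ψ (M.T i j a) (M.T i j b)) := by
  have c := h.v_inv j (M.T i j a) (M.P i j b) l
  rw [lie_v_T' hij, lie_v_P' hij] at c
  simp at c
  linear_combination -c

lemma stepB_F (h : M.Normalized ψ) {i j : Fin n} (hij : i ≠ j) (a b : ℕ) (l : Fin n) :
    M.κ l (ψ (M.T i i a) (M.T i j b)) = 0 := by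
  have c := h.v_inv j (M.T i i a) (M.P i j b) l
  rw [lie_v_T'' hij, lie_v_P' hij] at c
  simpa [M.two_ne] using c

/-- The `D i`-component of `ψ (X i • D j, ·)` at the origin, on fields in direction `j`.
Applying the cocycle identity to `X i • D j`, `X i ^ (p - 3) • t j` and `X i * X j • t j`, and moving
all exponents of `X i` to one side by invariance under `v i` and `v j`, gives a linear system with only the zero solution. -/
lemma stepB_j (h : M.Normalized ψ) {i j : Fin n} (hij : i ≠ j) :
    M.κ i (ψ (M.Y i j j (q + 3)) (M.P i j 1)) = 0 ∧
      M.κ i (ψ (M.T i j 1) (M.T i j (q + 3))) = 0 := by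
  have b1 : ⁅M.X i • M.D j, M.Y i j j 1⁆ = (2 : F) • M.T i j 2 := by
    rw [Y, T, lie_smul_D]
    simp [Derivation.leibniz, Derivation.leibniz_pow, M.D_X_self, M.D_X_ne hij, M.D_X_ne hij.symm]
    match_scalars
    simp only [map_ofNat]
    ring
  have b2 : ⁅M.T i j (q + 2), M.Y i j j 1⁆ = M.Y i j j (q + 3) := by
    rw [Y, T, Y, lie_smul_D]
    simp [Derivation.leibniz, Derivation.leibniz_pow, M.D_X_self, M.D_X_ne hij, M.D_X_ne hij.symm]
    match_scalars
    ring
  have c := h.gl i j (sq2_T i j (q + 1)) (sq2_Y i j j 1) i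
  rw [if_neg hij.symm, lie_gl_T hij, b1, b2, ← P_one, h.skew i (M.P i j (q + 1 + 1 + 1)),
    ψ.map_smul, LinearMap.smul_apply, (M.κ i).map_smul, smul_eq_mul] at c
  have c1 := stepB_FD h hij 1 (q + 3) i
  have c2 := stepB_FD h hij 2 (q + 2) i
  have c3 := stepB_FD h hij (q + 2) 2 i
  have c4 := stepB_FD h hij (q + 3) 1 i
  have r := h.v_inv i (M.Y i j j (q + 2)) (M.P i j 1) i
  rw [lie_v_Y hij, lie_v_P hij] at r
  simp [castq (F := F) (q := q)] at r
  have s1 := h.skew i (M.T i j 1) (M.T i j (q + 3))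
  have s2 := h.skew i (M.T i j 2) (M.T i j (q + 2))
  have h3 := M.two_ne
  simp only [add_assoc, Nat.reduceAdd] at *
  set d3 := M.κ i (ψ (M.Y i j j (q + 3)) (M.P i j 1))
  set d1 := M.κ i (ψ (M.Y i j j 1) (M.P i j (q + 3)))
  have : d3 = 0 := by grind
  refine ⟨this, ?_⟩
  have : 2 * M.κ i (ψ (M.T i j 1) (M.T i j (q + 3))) = 0 := by grind
  simpa [h3] using this

/-- The `D i`-component of `ψ (X i • D j, ·)` at the origin, on fields in direction `i`. -/
lemma stepB_i (h : M.Normalized ψ) {i j : Fin n} (hij : i ≠ j) :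
    M.κ i (ψ (M.Y i j i (q + 3)) (M.P i j 1)) = 0 := by
  have b1 : ⁅M.X i • M.D j, M.Y i j i 0⁆ = M.T i i 1 - M.T i j 1 := by
    rw [Y, T, T, lie_smul_D]
    simp [Derivation.leibniz, Derivation.leibniz_pow, M.D_X_self, M.D_X_ne hij, M.D_X_ne hij.symm,
      mul_comm]
  have b2 : ⁅M.T i j (q + 3), M.Y i j i 0⁆ =
      M.Y i j i (q + 3) + (2 : F) • M.Y i j j (q + 3) := by
    rw [Y, T, Y, Y, lie_smul_D]
    simp [Derivation.leibniz, Derivation.leibniz_pow, M.D_X_self, M.D_X_ne hij, M.D_X_ne hij.symm,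
      castqA F A (q := q)]
    match_scalars <;> try simp only [map_ofNat]
    all_goals ring
  have c := h.gl i j (sq2_T i j (q + 2)) (sq2_Y i j i 0) i
  rw [if_neg hij.symm, lie_gl_T hij, b1, b2, ← P_one, h.skew i (M.P i j (q + 2 + 1 + 1))] at c
  have r0 := h.v_inv i (M.Y i j i 0) (M.P i j (q + 3)) i
  have r1 := h.v_inv i (M.Y i j i 1) (M.P i j (q + 2)) i
  rw [lie_v_Y' hij, lie_v_P hij] at r0 r1
  obtain ⟨d3, f1⟩ := stepB_j h hij
  have f2 := stepB_F h hij 1 (q + 3) i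
  have h3 := M.three_ne
  have h2 := M.two_ne
  simp [castq (F := F) (q := q), add_assoc] at c r0 r1
  simp only [d3, f1, f2] at c
  grind

/-- The `D j`-component of `ψ (X i • D j, ·)` at the origin. -/
lemma stepB_target_j (h : M.Normalized ψ) {i j : Fin n} (hij : i ≠ j) :
    M.κ j (ψ (M.P i j 1) (M.T i j (q + 4))) = 0 := by
  have c1 := h.v_inv j (M.P i j 1) (M.P i j (q + 4)) j
  rw [lie_v_P' hij, lie_v_P' hij] at c1
  have c2 := h.v_inv i (M.T i j (q + 3)) (M.P i j 1) j
  rw [lie_v_T hij, lie_v_P hij] at c2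
  have c3 := h.gl i j (sq2_T i j 0) (sq2_T i j (q + 2)) j
  have b1 : ⁅M.T i j (0 + 1), M.T i j (q + 2 + 1)⁆ = 0 := by
    rw [T, T, lie_smul_D]
    simp [Derivation.leibniz, Derivation.leibniz_pow, M.D_X_self, M.D_X_ne hij, M.D_X_ne hij.symm]
    match_scalars
    ring
  rw [if_pos rfl, lie_gl_T hij, lie_gl_T hij, b1] at c3
  have f1 := (stepB_j h hij).2
  have s1 := h.skew j (M.P i j 1) (M.T i j (q + 4))
  have s2 := h.skew j (M.T i j (q + 3)) (M.P i j 2)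
  have s3 := h.skew j (M.T i j 1) (M.P i j (q + 4))
  have h2 := M.two_ne
  simp [castq (F := F) (q := q), add_assoc] at c1 c2 c3
  simp only [f1] at c3
  grind

/-- The `D l`-component of `ψ (X i • D j, ·)` at the origin for `l ≠ i, j`, on fields in
direction `l`: the field is the bracket of `X j • D l` and `X i ^ (p - 1) • t l`. -/
lemma stepB_target_l (h : M.Normalized ψ) {i j l : Fin n} (hij : i ≠ j) (hli : l ≠ i)
    (hlj : l ≠ j) : M.κ l (ψ (M.P i j 1) ((M.X i ^ (q + 4) * M.X j) • M.D l)) = 0 := by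
  set w : L := (M.X i ^ (q + 4) * M.X j) • M.D l with hw
  have c := congrArg (M.κ l) (h.coc.coc (M.X j • M.D l) (M.T i l (q + 4)) (M.P i j 1))
  have b1 : ⁅M.X j • M.D l, M.T i l (q + 4)⁆ = w := by
    rw [T, hw, lie_smul_D]
    simp [Derivation.leibniz, Derivation.leibniz_pow, M.D_X_self, M.D_X_ne hlj, M.D_X_ne hlj.symm,
      M.D_X_ne hli, M.D_X_ne hli.symm]
    match_scalars
    ring
  have b2 : ⁅M.X j • M.D l, M.P i j 1⁆ = - M.P i l 1 := by
    rw [P, P, lie_smul_D]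
    simp [Derivation.leibniz, Derivation.leibniz_pow, M.D_X_self, M.D_X_ne hli, M.D_X_ne hli.symm]
  have b3 : ⁅M.T i l (q + 4), M.P i j 1⁆ = 0 := by
    rw [P, T, lie_smul_D]
    simp [Derivation.leibniz, Derivation.leibniz_pow, M.D_X_ne hij, M.D_X_ne hli.symm,
      M.D_X_ne hlj]
  rw [b1, b2, b3] at c
  simp only [map_sub, map_add, map_neg, map_zero, M.κ_lie_gl, M.κ_lie_sq (sq2_T i l (q + 3)),
    LinearMap.neg_apply, LinearMap.zero_apply, if_pos, stepB_target_j h hli.symm,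
    stepB_other' h hli hlj, P_one i j, if_neg hlj.symm] at c
  rw [← P_one, h.skew l w, stepB_other' h hli hlj] at c
  simpa using c

/-- The `D l`-component of `ψ (X i • D j, ·)` at the origin for `l ≠ i, j`, on fields in
another direction: weights force a factor `X l ^ (p - 1)`, which `v l` creates. -/
lemma stepB_overflow (h : M.Normalized ψ) {i j k l : Fin n} (hli : l ≠ i)
    (hlj : l ≠ j) (hlk : l ≠ k) (g : A) (hg : M.D l g = 0) :
    M.κ l (ψ (M.P i j 1) ((M.X l ^ (q + 4) * g) • M.D k)) = 0 := by
  have c := h.v_inv l (M.P i j 1) ((M.X l ^ (q + 3) * g) • M.D k) l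
  have b1 : ⁅M.v l, (M.X l ^ (q + 3) * g) • M.D k⁆ =
      (-2 : F) • ((M.X l ^ (q + 4) * g) • M.D k) := by
    rw [v, lie_smul_D]
    simp [Derivation.leibniz, Derivation.leibniz_pow, M.D_X_self, M.D_X_ne hlk, hg,
      castqA F A (q := q)]
    match_scalars
    simp only [map_ofNat]
    ring
  rw [lie_v_P'' hli hlj, b1] at c
  simpa [M.two_ne] using c

/-- A normalized cocycle kills the linear fields `X i • D j`, `i ≠ j`. -/
lemma Normalized.gl_eq (h : M.Normalized ψ) {i j : Fin n} (hij : i ≠ j) :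
    ψ (M.X i • M.D j) = 0 := by
  refine h.crit (fun m => (if m = i then 1 else 0) - if m = j then 1 else 0) ?_ ?_ ?_
  · intro m
    rw [lie_D_smul_D, M.D_X]
    split_ifs <;> simp [h.D_eq]
  · intro m
    rw [lie_smul_right, M.lie_t_D, t, Derivation.smul_apply, M.D_X]
    by_cases hmi : m = i
    · subst hmi
      simp [hij]
    · by_cases hmj : m = j
      · subst hmj
        simp [hij, hmi]
      · simp [hmi, hmj, Ne.symm hmi]
  · intro a k l ha hw
    rw [← P_one]
    by_cases hli : l = i
    · subst hli
      by_cases hkl : k = l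
      · subst hkl
        have e1 : a k = q + 4 := cast_neg_one (F := F) (ha k) (by rw [hw]; simp [hij])
        have e2 : a j = 1 := cast_one (F := F) (ha j) (by rw [hw]; simp [hij.symm])
        rw [M.mon_two a hij fun m h1 h2 => cast_zero (F := F) (ha m) (by
          rw [hw]; simp [h1, h2]), e1, e2]
        have := stepB_i h hij
        rw [h.skew, Y] at this
        rw [show M.X k ^ (q + 4) * M.X j ^ 1 = M.X k ^ (q + 3) * M.X j * M.X k by ring]
        simpa using this
      · have e1 : a l = q + 3 := cast_neg_two (F := F) (ha l) (by
          rw [hw]; simp [hij, Ne.symm hkl]; norm_num)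
        by_cases hkj : k = j
        · subst hkj
          have e2 : a k = 2 := cast_inj (F := F) (ha k) (by omega) (by
            rw [hw]; simp [hkl]; norm_num)
          rw [M.mon_two a hij fun m h1 h2 => cast_zero (F := F) (ha m) (by
            rw [hw]; simp [h1, h2]), e1, e2]
          have := (stepB_j h hij).1
          rw [h.skew, Y] at this
          rw [show M.X l ^ (q + 3) * M.X k ^ 2 = M.X l ^ (q + 3) * M.X k * M.X k by ring]
          simpa using this
        · have e2 : a k = 1 := cast_one (F := F) (ha k) (by
            rw [hw]; simp [hkl, hkj])
          have e3 : a j = 1 := cast_one (F := F) (ha j) (by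
            rw [hw]; simp [hij.symm, Ne.symm hkj])
          rw [M.mon_three a hij (Ne.symm hkl) (Ne.symm hkj) fun m h1 h2 h3 =>
            cast_zero (F := F) (ha m) (by rw [hw]; simp [h1, h2, h3]), e1, e2, e3, h.skew,
            pow_one, pow_one]
          have := stepB_other h hkl hkj (q + 3) 1 l
          rw [Y] at this
          rw [this, neg_zero]
    · by_cases hlj : l = j
      · subst hlj
        by_cases hki : k = i
        · subst hki
          have : a = 0 := by
            funext m
            exact cast_zero (F := F) (ha m) (by rw [hw]; simp)
          rw [this, M.mon_zero, one_smul, h.coc.skew, h.D_eq]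
          simp
        · have e1 : a i = q + 4 := cast_neg_one (F := F) (ha i) (by
            rw [hw]; simp [hij, Ne.symm hki])
          have e2 : a k = 1 := cast_one (F := F) (ha k) (by
            rw [hw]; simp [hki])
          rw [M.mon_two a (Ne.symm hki) fun m h1 h2 => cast_zero (F := F) (ha m) (by
            rw [hw]; simp [h1, h2]), e1, e2, pow_one]
          by_cases hkl : k = l
          · subst hkl
            exact stepB_target_j h hij
          · rw [h.skew]
            have := stepB_other' h hki hkl (q + 4) 1 l
            rw [T] at this
            rw [this, neg_zero]
      · by_cases hkl : k = l
        · subst hkl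
          have e1 : a i = q + 4 := cast_neg_one (F := F) (ha i) (by
            rw [hw]; simp [hij])
          have e2 : a j = 1 := cast_one (F := F) (ha j) (by
            rw [hw]; simp [hij.symm])
          rw [M.mon_two a hij fun m h1 h2 => cast_zero (F := F) (ha m) (by
            rw [hw]; simp [h1, h2]), e1, e2, pow_one]
          exact stepB_target_l h hij hli hlj
        · have e1 : a l = q + 4 := cast_neg_one (F := F) (ha l) (by
            rw [hw]; simp [hli, hlj, Ne.symm hkl])
          rw [M.mon_eq a l, e1]
          refine stepB_overflow h hli hlj (Ne.symm hkl) _ (M.D_prod_eq_zero _ _ _ ?_)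
          simp

end
end TruncModel

/-! ### Vanishing of normalized cocycles -/

namespace TruncModel
open LieCoh
section
set_option linter.unusedSectionVars false
set_option linter.unusedSimpArgs false
variable {F A : Type*} [Field F] [CommRing A] [Algebra F A] {n q : ℕ}
variable (M : TruncModel F A (q + 5) n) [hp : Fact (q + 5).Prime] [CharP F (q + 5)]

local notation "L" => Derivation F A A
local notation "Hom1" => Derivation F A A →ₗ[F] Derivation F A A
local notation "Hom2" => Derivation F A A →ₗ[F] Derivation F A A →ₗ[F] Derivation F A A

variable {M}
variable {ψ : Derivation F A A →ₗ[F] Derivation F A A →ₗ[F] Derivation F A A}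

lemma lie_v_pow (k : Fin n) (m : ℕ) : ⁅M.v k, M.X k ^ (m + 3) • M.D k⁆ =
    ((m + 1 : ℕ) : F) • (M.X k ^ (m + 4) • M.D k) := by
  rw [v, lie_smul_D]
  simp [Derivation.leibniz, Derivation.leibniz_pow, M.D_X_self]
  match_scalars
  simp
  ring

lemma Normalized.mem_of_smul (h : M.Normalized ψ) {c : F} (hc : c ≠ 0) {x : L}
    (hx : c • x ∈ h.coc.ker) : x ∈ h.coc.ker :=
  (Submodule.smul_mem_iff h.coc.ker.toSubmodule hc).1 hx

lemma Normalized.v_mem (h : M.Normalized ψ) (i : Fin n) : M.v i ∈ h.coc.ker := h.v_eq i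

lemma Normalized.P_mem (h : M.Normalized ψ) {i j : Fin n} (hij : i ≠ j) :
    M.P i j 1 ∈ h.coc.ker := by
  rw [P_one]; exact h.gl_eq hij

lemma lie_gl_v {i j : Fin n} (hij : i ≠ j) : ⁅M.P i j 1, M.v j⁆ = (2 : F) • M.T i j 1 := by
  rw [P, v, T, lie_smul_D]
  simp [Derivation.leibniz, Derivation.leibniz_pow, M.D_X_self, M.D_X_ne hij, M.D_X_ne hij.symm]
  match_scalars
  simp only [map_ofNat]
  ring

lemma Normalized.T_mem (h : M.Normalized ψ) (i j : Fin n) : M.T i j 1 ∈ h.coc.ker := by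
  by_cases hij : i = j
  · subst hij
    have : M.T i i 1 = M.v i := by rw [T, v, pow_one, pow_two]
    rw [this]; exact h.v_mem i
  · refine h.mem_of_smul M.two_ne ?_
    rw [← lie_gl_v hij]
    exact h.coc.ker.lie_mem (h.P_mem hij) (h.v_mem j)

lemma Normalized.cube_of_ne (h : M.Normalized ψ) {i j : Fin n} (hij : i ≠ j) :
    M.X i ^ 3 • M.D i ∈ h.coc.ker := by
  have b : ⁅M.P i j 2, M.T j i 1⁆ = M.X i ^ 3 • M.D i - (2 : F) • M.T i j 2 := by
    rw [P, T, T, lie_smul_D]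
    simp [Derivation.leibniz, Derivation.leibniz_pow, M.D_X_self, M.D_X_ne hij, M.D_X_ne hij.symm]
    match_scalars <;> try simp only [map_ofNat]
    all_goals ring
  have h1 : M.P i j 2 ∈ h.coc.ker := by
    have := lie_v_P (M := M) hij 1
    rw [Nat.cast_one, one_smul] at this
    rw [← this]
    exact h.coc.ker.lie_mem (h.v_mem i) (h.P_mem hij)
  have h2 : M.T i j 2 ∈ h.coc.ker := by
    have := lie_v_T (M := M) hij 1
    rw [Nat.cast_one, one_smul] at this
    rw [← this]
    exact h.coc.ker.lie_mem (h.v_mem i) (h.T_mem i j)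
  have b' : M.X i ^ 3 • M.D i = ⁅M.P i j 2, M.T j i 1⁆ + (2 : F) • M.T i j 2 := by
    rw [b, sub_add_cancel]
  rw [b']
  exact h.coc.ker.add_mem (h.coc.ker.lie_mem h1 (h.T_mem j i)) (h.coc.ker.smul_mem _ h2)

/-- Invariance under `v i` determines all values on `X i ^ (m + 3) • D i` and `X i ^ (b + 3) • D i`
with `m + b = p - 5` from the one with `m = 0`, through binomial coefficients. -/
lemma stepC_rec (h : M.Normalized ψ) (i : Fin n) (m : ℕ) : ∀ b, m + b = q →
    24 * M.κ i (ψ (M.X i ^ (m + 3) • M.D i) (M.X i ^ (b + 3) • M.D i)) =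
      (m + 1) * (m + 2) * (m + 3) * (m + 4) *
        M.κ i (ψ (M.X i ^ 3 • M.D i) (M.X i ^ (q + 3) • M.D i)) := by
  induction m with
  | zero =>
    intro b hb
    obtain rfl : b = q := by omega
    simp only [Nat.cast_zero, zero_add]
    ring
  | succ m ih =>
    intro b hb
    have h1 := ih (b + 1) (by omega)
    have r := h.v_inv i (M.X i ^ (m + 3) • M.D i) (M.X i ^ (b + 3) • M.D i) i
    rw [lie_v_pow, lie_v_pow, ψ.map_smul, LinearMap.smul_apply, (ψ _).map_smul,
      (M.κ i).map_smul, (M.κ i).map_smul, smul_eq_mul, smul_eq_mul] at r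
    have hne := nz (F := F) (q := q) (m := m + 1) (by omega) (by omega)
    have hbm : (b : F) = -6 - m := by
      have e1 := congrArg (Nat.cast (R := F)) hb
      have e2 := castq (F := F) (q := q)
      push_cast at e1
      linear_combination e1 + e2
    push_cast at r hne ⊢
    rw [hbm] at r
    rw [show b + 1 + 3 = b + 4 by ring] at h1
    rw [show m + 1 + 3 = m + 4 by ring]
    apply mul_left_cancel₀ hne
    linear_combination 24 * r + (m + 5) * h1

/-- The kernel contains the cubic fields `X i ^ 3 • D i`. For `n ≥ 2` such a field is generated by
fields of lower degree. For `n = 1` the only value left by `Normalized.crit` is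
`ψ (X ^ 3 • D, X ^ (p - 2) • D)` at the origin; `stepC_rec` with `m = p - 5` multiplies it by
`(p - 4)(p - 3)(p - 2)(p - 1) = 24`, and skew-symmetry turns the result into `48` times the value
being zero. -/
lemma Normalized.cube_mem (h : M.Normalized ψ) (i : Fin n) :
    M.X i ^ 3 • M.D i ∈ h.coc.ker := by
  by_cases hj : ∃ j, i ≠ j
  · obtain ⟨j, hij⟩ := hj
    exact h.cube_of_ne hij
  push Not at hj
  rw [h.coc.mem_ker]
  refine h.crit (fun _ => 2) ?_ ?_ ?_
  · intro j
    rw [← hj j, lie_D_smul_D]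
    have : M.D i (M.X i ^ 3) • M.D i = (3 : F) • M.v i := by
      rw [v]
      simp [Derivation.leibniz_pow, M.D_X_self]
      match_scalars
      simp [map_ofNat]
    rw [this, ψ.map_smul, h.v_eq, smul_zero]
  · intro j
    rw [← hj j, lie_smul_right, M.lie_t_D, t, Derivation.smul_apply, Derivation.leibniz_pow]
    simp [M.D_X_self]
    match_scalars
    simp only [map_ofNat]
    ring
  · intro a k l ha hw
    rw [← hj k, ← hj l]
    have e1 : a i = q + 3 := cast_neg_two (F := F) (ha i) (by
      rw [hw, ← hj k, ← hj l]; simp)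
    rw [M.mon_single a i fun m hm => absurd (hj m).symm hm, e1]
    have h1 := stepC_rec h i q 0 (by omega)
    rw [castq, h.skew, zero_add] at h1
    have h2 : (48 : F) * M.κ i (ψ (M.X i ^ 3 • M.D i) (M.X i ^ (q + 3) • M.D i)) = 0 := by
      linear_combination -h1
    have h3 : (48 : F) ≠ 0 := by
      have := M.two_ne
      have := M.three_ne
      rw [show (48 : F) = 2 * 2 * 2 * 2 * 3 by norm_num]
      simp [*]
    simpa [h3] using h2

/-- A normalized cocycle vanishes: its kernel, a subalgebra containing the `D j`, `t j`, `v j`,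
`X i • t j`, `X i • D j` and the cubes, is all of `Der A`, by induction on the degree. -/
lemma Normalized.eq_zero (h : M.Normalized ψ) : ψ = 0 := by
  classical
  suffices H : ∀ N : ℕ, ∀ a : Fin n → ℕ, (∀ i, a i < q + 5) → ∑ i, a i = N →
      ∀ k, M.e a k ∈ h.coc.ker by
    apply M.L_ext
    intro a ha k
    exact H _ a ha rfl k
  intro N
  induction N with
  | zero =>
    intro a _ h0 k
    have : a = 0 := by
      funext i
      exact (Finset.sum_eq_zero_iff.1 h0) i (Finset.mem_univ i)
    rw [this, e_zero]
    exact h.D_eq k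
  | succ N ih =>
    intro a ha hN k
    by_cases hi : ∃ i, i ≠ k ∧ a i ≠ 0
    · obtain ⟨i, hik, hai⟩ := hi
      set b := Function.update a i (a i - 1) with hb
      have hba : M.X i • M.e b k = M.e a k := by
        rw [e, e, hb, M.mon_update, M.mon_eq a i, smul_smul, ← mul_assoc, ← pow_succ',
          Nat.sub_add_cancel (Nat.pos_of_ne_zero hai)]
      have hbox : ∀ m, b m < q + 5 := by
        intro m
        by_cases hm : m = i
        · subst hm; simp [hb]; have := ha m; omega
        · simp [hb, hm, ha]
      have hbK : M.e b k ∈ h.coc.ker := by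
        refine ih b hbox ?_ k
        rw [hb, Finset.sum_update_of_mem (Finset.mem_univ i)]
        rw [← Finset.add_sum_erase _ _ (Finset.mem_univ i)] at hN
        rw [Finset.sdiff_singleton_eq_erase]
        omega
      by_cases hj : ∃ j, wt (F := F) b k j ≠ 0
      · obtain ⟨j, hj⟩ := hj
        refine h.mem_of_smul hj ?_
        have b1 : ⁅M.T i j 1, M.e b k⁆ = wt (F := F) b k j • M.e a k := by
          have : M.T i j 1 = M.X i • M.t j := by rw [T, t, smul_smul, pow_one]
          rw [this, lie_smul_left, M.lie_t_e, e, Derivation.smul_apply, M.D_X_ne hik, smul_zero,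
            zero_smul, sub_zero, ← hba, smul_comm, e]
        rw [← b1]
        exact h.coc.ker.lie_mem (h.T_mem i j) hbK
      · push Not at hj
        have hbk : ∀ m, b m = if m = k then 1 else 0 := by
          intro m
          have := hj m
          rw [wt, sub_eq_zero] at this
          refine cast_inj (F := F) (hbox m) (by split_ifs <;> omega) ?_
          rw [this]; split_ifs <;> simp
        have : M.e a k = M.T i k 1 := by
          rw [← hba, e, T, smul_smul, M.mon_single b k fun m hm => by rw [hbk, if_neg hm], hbk,
            if_pos rfl, pow_one, pow_one]
        rw [this]
        exact h.T_mem i k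
    · push Not at hi
      rw [Finset.sum_eq_single k (fun m _ hm => hi m hm) (by simp)] at hN
      have hk := ha k
      rw [e, M.mon_single a k hi, hN]
      rw [hN] at hk
      match N, hN, hk with
      | 0, _, _ => rw [zero_add, pow_one]; exact h.t_eq k
      | 1, _, _ => exact h.v_mem k
      | 2, _, _ => exact h.cube_mem k
      | m + 3, hN, hk =>
        refine h.mem_of_smul (nz (F := F) (q := q) (m := m + 1) (by omega) (by omega)) ?_
        rw [show m + 3 + 1 = m + 4 by ring, ← lie_v_pow]
        refine h.coc.ker.lie_mem (h.v_mem k) ?_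
        have := ih (Function.update 0 k (m + 3)) ?_ ?_ k
        · rwa [e, M.mon_single _ k fun i hi => by simp [hi], Function.update_self] at this
        · intro i
          by_cases hi : i = k
          · subst hi; simp; omega
          · simp [hi]
        · rw [Finset.sum_update_of_mem (Finset.mem_univ k)]; simp

/-- Every 2-cocycle is cohomologous to a linear combination of the `Sq (D i)`. -/
theorem exists_of_isCoc {ψ : Hom2} (hψ : IsCoc ψ) :
    ∃ (c : Fin n → F) (φ : Hom1), ψ - ∑ i, c i • M.Sq i = d φ := by
  obtain ⟨c, φ, ψ', h1, h2, h3, h4, h5⟩ := M.stage2 hψ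
  refine ⟨c, φ, ?_⟩
  rw [h1, Normalized.eq_zero (M := M) ⟨h2, h3, h4, h5⟩, zero_add]

end
end TruncModel

/-! ### The Jacobson–Witt algebra -/

namespace LieCoh
section
variable {F L : Type*} [Field F] [LieRing L] [LieAlgebra F L]

lemma isCocycle_of_isCoc {ψ : L →ₗ[F] L →ₗ[F] L} (h : IsCoc ψ) :
    IsCocycle F (fun x y : L => ⁅x, y⁆) (fun x y => ψ x y) :=
  ⟨⟨⟨fun x => (ψ x).isLinear, fun y => (ψ.flip y).isLinear⟩, h.alt⟩, h.coc⟩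

/-- The cocycles of the statement, given by unbundled maps, come from bundled ones. -/
lemma exists_isCoc {ψ : L → L → L} (h : IsCocycle F (fun x y : L => ⁅x, y⁆) ψ) :
    ∃ Ψ : L →ₗ[F] L →ₗ[F] L, IsCoc Ψ ∧ ∀ x y, Ψ x y = ψ x y := by
  obtain ⟨⟨⟨h1, h2⟩, h3⟩, h4⟩ := h
  exact ⟨LinearMap.mk₂ F ψ (fun x x' y => (h2 y).map_add x x') (fun c x y => (h2 y).map_smul c x)
    (fun x => (h1 x).map_add) (fun c x => (h1 x).map_smul c), ⟨h3, h4⟩, fun _ _ => rfl⟩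

/-- The squaring of `ad z`, a sum over `0 < i < p`, is `sqHom p (ad z)`. -/
lemma sqE_eq (p : ℕ) [hp : Fact p.Prime] [CharP F p] (z x y : L) :
    SqE F p (fun x y : L => ⁅x, y⁆) z x y = sqHom p (LieModule.toEnd F L L z) x y := by
  rw [sqHom_apply, Finset.Nat.sum_antidiagonal_eq_sum_range_succ
    (fun i j => ⁅dp (LieModule.toEnd F L L z) i x, dp (LieModule.toEnd F L L z) j y⁆) p, SqE,
    Squaring]
  refine Finset.sum_subset_zero_on_sdiff ?_ ?_ ?_
  · intro i hi
    rw [Finset.mem_Ioo] at hi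
    rw [Finset.mem_range]
    omega
  · intro i hi
    rw [Finset.mem_sdiff, Finset.mem_Ioo, Finset.mem_range] at hi
    -- the only extra indices are `0` and `p`, where a divided power of order `p` appears
    obtain rfl | rfl : i = 0 ∨ i = p := by omega
    · rw [Nat.sub_zero, dp_p p, lie_zero]
    · rw [dp_p i, zero_lie]
  · intro i _
    simp only [dp, LinearMap.smul_apply, smul_lie, lie_smul, smul_smul, Nat.cast_mul, mul_inv]
    rw [Module.End.pow_apply, Module.End.pow_apply, mul_comm]
    rfl

end
end LieCoh

namespace TruncModel
section
variable {F A : Type*} [Field F] [CommRing A] [Algebra F A] {n q : ℕ}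
variable (M : TruncModel F A (q + 5) n) [hp : Fact (q + 5).Prime] [CharP F (q + 5)]

lemma sqE_eq (i : Fin n) (x y : Derivation F A A) :
    SqE F (q + 5) (fun x y : Derivation F A A => ⁅x, y⁆) (M.D i) x y = M.Sq i x y :=
  LieCoh.sqE_eq (q + 5) _ x y

lemma isCocycle_sqE (i : Fin n) :
    IsCocycle F (fun x y : Derivation F A A => ⁅x, y⁆)
      (SqE F (q + 5) (fun x y => ⁅x, y⁆) (M.D i)) := by
  have h := LieCoh.isCocycle_of_isCoc (M.isCoc_Sq i)
  simp only [← M.sqE_eq] at h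
  exact h

/-- In the model, every 2-cocycle is a unique linear combination of the `Sq (D i)` modulo
coboundaries. -/
theorem existsUnique_isCoboundary {ψ : Derivation F A A → Derivation F A A → Derivation F A A}
    (hψ : IsCocycle F (fun x y => ⁅x, y⁆) ψ) :
    ∃! c : Fin n → F, IsCoboundary F (fun x y => ⁅x, y⁆)
      (fun x y => ψ x y - ∑ i, c i • SqE F (q + 5) (fun x y => ⁅x, y⁆) (M.D i) x y) := by
  obtain ⟨Ψ, hΨ, hψΨ⟩ := LieCoh.exists_isCoc hψ
  obtain ⟨c, φ, hc⟩ := M.exists_of_isCoc hΨ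
  refine ⟨c, ⟨φ, fun x y => ?_⟩, ?_⟩
  · have := LinearMap.congr_fun₂ hc x y
    rw [LieCoh.d_apply] at this
    simp only [M.sqE_eq, ← hψΨ]
    simpa [LinearMap.sum_apply] using this
  · rintro c' ⟨φ', hc'⟩
    have e' : Ψ - ∑ i, c' i • M.Sq i = LieCoh.d φ' := by
      refine LinearMap.ext₂ fun x y => ?_
      rw [LieCoh.d_apply, ← hc' x y]
      simp [LinearMap.sum_apply, M.sqE_eq, hψΨ]
    have key : ∑ i, (c' i - c i) • M.Sq i = LieCoh.d (φ - φ') := by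
      rw [map_sub, ← hc, ← e']
      rw [Finset.sum_congr rfl fun i _ => sub_smul (c' i) (c i) (M.Sq i)]
      refine (Finset.sum_sub_distrib (fun i => c' i • M.Sq i) fun i => c i • M.Sq i).trans ?_
      exact (sub_sub_sub_cancel_left _ _ _).symm
    funext j
    exact sub_eq_zero.1 (M.Sq_unique key j)

end
end TruncModel

section
variable (F : Type*) [Field F] (p n : ℕ)

/-- Evaluation at the origin, the augmentation of `A(n)`. -/
def augT (hp : p ≠ 0) : TruncP F p n →ₐ[F] F :=
  Ideal.Quotient.liftₐ _ (MvPolynomial.aeval fun _ => 0) (by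
    intro a ha
    have : truncIdeal F p n ≤
        RingHom.ker (MvPolynomial.aeval (R := F) fun _ : Fin n => (0 : F)) := by
      rw [truncIdeal, Ideal.span_le]
      rintro _ ⟨i, rfl⟩
      simp [RingHom.mem_ker, hp]
    exact this ha)

/-- The truncated polynomial algebra with its coordinates, partial derivatives and augmentation. -/
def truncModel [CharP F p] (hp : p ≠ 0) : TruncModel F (TruncP F p n) p n where
  X i := Ideal.Quotient.mk _ (MvPolynomial.X i)
  D := Dj F p n
  ε := augT F p n hp
  D_X j i := by
    change DjL F p n j _ = _
    rw [DjL_mk, MvPolynomial.pderiv_X, Pi.single_apply]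
    split_ifs <;> simp
  X_pow i := by
    rw [← map_pow]
    exact Ideal.Quotient.eq_zero_iff_mem.2 (Ideal.subset_span ⟨i, rfl⟩)
  ε_X i := by
    change MvPolynomial.aeval (fun _ => (0 : F)) (MvPolynomial.X i) = 0
    simp
  adjoin_X := by
    have h := congrArg (Subalgebra.map (Ideal.Quotient.mkₐ F (truncIdeal F p n)))
      (MvPolynomial.adjoin_range_X (R := F) (σ := Fin n))
    rw [AlgHom.map_adjoin, ← Set.range_comp, Algebra.map_top,
      (AlgHom.range_eq_top _).2 (Ideal.Quotient.mkₐ_surjective F _)] at h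
    exact h

end


/-- Theorem 1.1: `H²(W(n), W(n)) = ⊕_{i=1}^n ⟨Sq(D_i)⟩_F`.
Each `Sq(D_i)` is a 2-cocycle of the Jacobson–Witt algebra `W(n)` with adjoint
coefficients, and every 2-cocycle differs from a unique `F`-linear combination
`∑ c_i · Sq(D_i)` by a 2-coboundary. -/
theorem witt_second_cohomology
    (p n : ℕ) (hp : p.Prime) (hp5 : 5 ≤ p)
    (F : Type*) [Field F] [IsAlgClosed F] [CharP F p] :
    (∀ i : Fin n,
      IsCocycle F (fun x y : Witt F p n => ⁅x, y⁆)
        (SqE F p (fun x y => ⁅x, y⁆) (Dj F p n i)))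
    ∧ ∀ ψ : Witt F p n → Witt F p n → Witt F p n,
        IsCocycle F (fun x y => ⁅x, y⁆) ψ →
        ∃! c : Fin n → F,
          IsCoboundary F (fun x y => ⁅x, y⁆)
            (fun x y => ψ x y - ∑ i, c i • SqE F p (fun x y => ⁅x, y⁆) (Dj F p n i) x y) := by
  obtain ⟨q, rfl⟩ : ∃ q, p = q + 5 := ⟨p - 5, by omega⟩
  have : Fact (q + 5).Prime := ⟨hp⟩
  exact ⟨(truncModel F (q + 5) n (by omega)).isCocycle_sqE,
    fun ψ hψ => (truncModel F (q + 5) n (by omega)).existsUnique_isCoboundary hψ⟩
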